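/- Let 0 < p < q ≤ +∞ and 1/r = 1/p − 1/q. Let μ and ν be non-negative Borel measures on I = (a,b) ⊆ ℝ, let w ∈ B⁺(I), and let u ∈ B⁺(I) satisfy ‖u‖_{q,[t,b),ν} < ∞ for all t ∈ I and u ≠ 0 ν-a.e. on (a,b). Then there exists a constant c > 0 such that ‖gw‖_{p,(a,b),μ} ≤ c ‖u(x) ‖g‖_{∞,(a,x),μ}‖_{q,(a,b),ν} for all g ∈ B⁺(I) if and only if B₂′ := ( ∫_{(a,b)} ‖w‖_{p,[x,b),μ}^r d( ‖u‖_{q,[x−,b),ν}^{−r} ) )^{1/r} + ‖w‖_{p,(a,b),μ} · ‖u‖_{q,(a,b),ν}^{−1} < ∞, where ‖u‖_{q,[x−,b),ν} := lim_{s→x−} ‖u‖_{q,[s,b),ν} and the integral is the Lebesgue–Stieltjes integral with respect to the non-decreasing left-continuous function x ↦ ‖u‖_{q,[x−,b),ν}^{−r}. Moreover, the best possible constant c satisfies c ≈ B₂′, with equivalence constants depending only on p and q. -/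

import Mathlib

/-!
Let `κ = w ^ p dμ` and `m = u ^ q dν` on `(a, b)`, write `W z = κ [z, b)`, and put `β = q / r`, so
that `r / p = 1 + 1 / β` and `q / p = 1 + β`. Adding to the Stieltjes measure an atom at `a` of mass
`‖u‖_{q,(a,b),ν} ^ (-r)` gives a measure `H` (`stielt`) whose distribution function is
`h y = H (-∞, y] = ‖u‖_{q,(y,b),ν} ^ (-r)` (`stielt_Iic`), that is `m (y, b) ^ (-1 / β)` when
`q < ∞`. Both summands of `B₂′` are then contained in one integral: `B₂′ ^ r` is comparable to
`∫ W ^ (r / p) dH` (`tailInt`, `tailInt_rpow_le`, `le_tailInt_rpow`).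

*Upper estimate, `q < ∞`.* With `f = g ^ p` and `Φ x = ‖g‖_{∞,(a,x),μ} ^ p` one has `f y ≤ Φ x`
for `y < x`. On the set `f ≤ K W ^ (1 / β) h` Tonelli's theorem bounds `∫ f dκ` by
`K ∫ W ^ (1 + 1 / β) dH`. Elsewhere `W y ≤ K ^ (-β) f(y) ^ β m (y, b)`, so the part of that set on
the dyadic level `f ∼ 2 ^ k` has `κ`-measure at most a constant times
`K ^ (-β) 2 ^ (k β) m {Φ > 2 ^ k}`; summing over `k` gives a multiple of
`K ^ (-β) ∫ Φ ^ (1 + β) dm` (`core_upper`). The choice of `K` that balances the two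
terms (`optimize_split`) yields the estimate.

*Lower estimate, `q < ∞`.* The inequality is tested with `g ^ p` equal to the least non-decreasing
majorant of `W ^ (1 / β) h` (`testFun`). Its left-hand side controls `∫ W ^ (1 + 1 / β) dH` from
above (`core_lower_left`), and its right-hand side is controlled by the same integral
(`core_lower_right`). Both facts rest on `half_tail` and `half_initial`, which replace the
fundamental theorem of calculus and are insensitive to atoms. The truncation to sets on which
everything is finite (`exhaust_le`) permits dividing by a power of the integral.

*The case `q = ∞`.* Then `r = p`, and the right-hand side of the inequality is finite only if `g`
is almost everywhere bounded by a multiple of `y ↦ ‖u‖_{∞,(y,b),ν}⁻¹`, which is itself an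
extremal function. Both estimates reduce to Tonelli's theorem, with constant `1`
(`upper_concrete_top`, `lower_concrete_top`).

No σ-finiteness is assumed of `μ`, `ν` or of the Stieltjes measure. It is recovered on the support
of `κ` (`reduce_sigmaFinite`), either from the finiteness of `∫ W ^ (r / p) dH`
(`markov_consequences`) or from testing the inequality with indicator functions of `[z, ∞)`
(`admissible_consequences`).
-/

open MeasureTheory Set ENNReal

noncomputable section

/-- The `μ`-essential supremum of `f` over `E`:
`‖f‖_{∞,E,μ} = sup {α : μ({y ∈ E : f y ≥ α}) > 0}`. -/
def eSup (μ : Measure ℝ) (E : Set ℝ) (f : ℝ → ℝ≥0∞) : ℝ≥0∞ :=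
  sSup {α : ℝ≥0∞ | 0 < μ {y | y ∈ E ∧ α ≤ f y}}

/-- `‖f‖_{p,E,μ}` for `0 < p ≤ ∞`. -/
def Nrm (p : ℝ≥0∞) (μ : Measure ℝ) (E : Set ℝ) (f : ℝ → ℝ≥0∞) : ℝ≥0∞ :=
  if p = ⊤ then eSup μ E f
  else (∫⁻ x in E, f x ^ p.toReal ∂μ) ^ (1 / p.toReal)

/-- `‖u(x) ‖g‖_{∞,(a,x),μ}‖_{q,(a,b),ν}`. -/
def RHSdual (q : ℝ≥0∞) (a b : ℝ) (μ ν : Measure ℝ) (u g : ℝ → ℝ≥0∞) : ℝ≥0∞ :=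
  Nrm q ν (Ioo a b) (fun x => u x * eSup μ (Ioo a x) g)

/-- The best constant in the inequality
`‖gw‖_{p,(a,b),μ} ≤ c ‖u(x) ‖g‖_{∞,(a,x),μ}‖_{q,(a,b),ν}` over all `g ∈ B⁺((a,b))`. -/
def bestCdual (p q : ℝ≥0∞) (a b : ℝ) (μ ν : Measure ℝ) (w u : ℝ → ℝ≥0∞) : ℝ≥0∞ :=
  sInf {c : ℝ≥0∞ | ∀ g : ℝ → ℝ≥0∞, Measurable g →
    Nrm p μ (Ioo a b) (fun t => g t * w t) ≤ c * RHSdual q a b μ ν u g}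

/-- `‖u‖_{q,[x-,b),ν} := lim_{s→x-} ‖u‖_{q,[s,b),ν}`; since `s ↦ ‖u‖_{q,[s,b),ν}` is
non-increasing, the left limit at `x ∈ (a,b)` equals the infimum over `s ∈ (a,x)`. -/
def uNminus (q : ℝ≥0∞) (ν : Measure ℝ) (a b : ℝ) (u : ℝ → ℝ≥0∞) (x : ℝ) : ℝ≥0∞ :=
  ⨅ s ∈ Ioo a x, Nrm q ν (Ico s b) u

/-! ### Measures on the line and their tails -/

/-- Any set of reals has a countable coinitial subset. -/
lemma exists_countable_coinitial (S : Set ℝ) :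
    ∃ T ⊆ S, T.Countable ∧ ∀ s ∈ S, ∃ t ∈ T, t ≤ s := by
  obtain ⟨T, hT, hd, hb, -⟩ := exists_countable_dense_bot_top S
  refine ⟨(↑) '' T, by rintro _ ⟨x, -, rfl⟩; exact x.2, hT.image _, fun s hs => ?_⟩
  by_cases h : IsBot (⟨s, hs⟩ : S)
  · exact ⟨s, ⟨_, hb _ h, rfl⟩, le_rfl⟩
  · simp only [IsBot, not_forall, not_le] at h
    obtain ⟨x, hx⟩ := h
    obtain ⟨y, hyT, hy⟩ := hd.exists_mem_open isOpen_Iio ⟨x, hx⟩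
    exact ⟨y, ⟨y, hyT, rfl⟩, (show (y : ℝ) < s from hy).le⟩

/-- Any set of reals has a countable cofinal subset. -/
lemma exists_countable_cofinal (S : Set ℝ) :
    ∃ T ⊆ S, T.Countable ∧ ∀ s ∈ S, ∃ t ∈ T, s ≤ t := by
  obtain ⟨T, hT, hd, -, hb⟩ := exists_countable_dense_bot_top S
  refine ⟨(↑) '' T, by rintro _ ⟨x, -, rfl⟩; exact x.2, hT.image _, fun s hs => ?_⟩
  by_cases h : IsTop (⟨s, hs⟩ : S)
  · exact ⟨s, ⟨_, hb _ h, rfl⟩, le_rfl⟩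
  · simp only [IsTop, not_forall, not_le] at h
    obtain ⟨x, hx⟩ := h
    obtain ⟨y, hyT, hy⟩ := hd.exists_mem_open isOpen_Ioi ⟨x, hx⟩
    exact ⟨y, ⟨y, hyT, rfl⟩, (show s < (y : ℝ) from hy).le⟩

/-- The measure of `S` is at most the supremum of the tails `μ [y, ∞)`, `y ∈ S`, whether or not
`S` has a least element. -/
lemma measure_le_of_forall_Ici (μ : Measure ℝ) (S : Set ℝ) (M : ℝ≥0∞)
    (h : ∀ y ∈ S, μ (Ici y) ≤ M) : μ S ≤ M := by
  obtain ⟨T, hTS, hT, hc⟩ := exists_countable_coinitial S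
  calc μ S ≤ μ (⋃ t ∈ T, Ici t) := measure_mono fun s hs => by
        obtain ⟨t, ht, hts⟩ := hc s hs
        exact mem_biUnion ht hts
    _ = ⨆ t ∈ T, μ (Ici t) := measure_biUnion_eq_iSup hT (by
        intro x hx y hy
        rcases le_total x y with hxy | hxy
        · exact ⟨x, hx, le_rfl, Ici_subset_Ici.2 hxy⟩
        · exact ⟨y, hy, Ici_subset_Ici.2 hxy, le_rfl⟩)
    _ ≤ M := iSup₂_le fun t ht => h t (hTS ht)

/-- The measure of `S` is at most the supremum of `μ (-∞, y]`, `y ∈ S`. -/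
lemma measure_le_of_forall_Iic (μ : Measure ℝ) (S : Set ℝ) (M : ℝ≥0∞)
    (h : ∀ y ∈ S, μ (Iic y) ≤ M) : μ S ≤ M := by
  obtain ⟨T, hTS, hT, hc⟩ := exists_countable_cofinal S
  calc μ S ≤ μ (⋃ t ∈ T, Iic t) := measure_mono fun s hs => by
        obtain ⟨t, ht, hts⟩ := hc s hs
        exact mem_biUnion ht hts
    _ = ⨆ t ∈ T, μ (Iic t) := measure_biUnion_eq_iSup hT (by
        intro x hx y hy
        rcases le_total x y with hxy | hxy
        · exact ⟨y, hy, Iic_subset_Iic.2 hxy, le_rfl⟩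
        · exact ⟨x, hx, le_rfl, Iic_subset_Iic.2 hxy⟩)
    _ ≤ M := iSup₂_le fun t ht => h t (hTS ht)

lemma sigmaFinite_of_tails (μ : Measure ℝ) (a : ℝ) (h0 : μ (Iic a) = 0)
    (h : ∀ z, a < z → μ (Ici z) < ∞) : SigmaFinite μ := by
  obtain ⟨T, hTS, hT, hc⟩ := exists_countable_coinitial (Ioi a)
  refine Measure.sigmaFinite_of_countable (S := insert (Iic a) (Ici '' T))
    ((hT.image _).insert _) ?_ ?_
  · rintro s (rfl | ⟨t, ht, rfl⟩)
    · simp [h0]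
    · exact h t (hTS ht)
  · refine eq_univ_of_forall fun x => ?_
    rcases le_or_gt x a with hx | hx
    · exact ⟨Iic a, mem_insert _ _, hx⟩
    · obtain ⟨t, ht, htx⟩ := hc x hx
      exact ⟨Ici t, Or.inr ⟨t, ht, rfl⟩, htx⟩

lemma sigmaFinite_restrict_of_Iic (H : Measure ℝ) (P : Set ℝ) (hP : MeasurableSet P)
    (h : ∀ z ∈ P, H (Iic z) < ∞) : SigmaFinite (H.restrict P) := by
  obtain ⟨T, hTS, hT, hc⟩ := exists_countable_cofinal P
  refine Measure.sigmaFinite_of_countable (S := insert Pᶜ (Iic '' T))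
    ((hT.image _).insert _) ?_ ?_
  · rintro s (rfl | ⟨t, ht, rfl⟩)
    · rw [Measure.restrict_apply hP.compl]; simp
    · exact (Measure.restrict_apply_le _ _).trans_lt (h t (hTS ht))
  · refine eq_univ_of_forall fun x => ?_
    by_cases hx : x ∈ P
    · obtain ⟨t, ht, htx⟩ := hc x hx
      exact ⟨Iic t, Or.inr ⟨t, ht, rfl⟩, htx⟩
    · exact ⟨Pᶜ, mem_insert _ _, hx⟩

lemma antitone_tail (μ : Measure ℝ) : Antitone fun y => μ (Ici y) :=
  fun _ _ h => measure_mono (Ici_subset_Ici.2 h)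

lemma monotone_initial (μ : Measure ℝ) : Monotone fun y => μ (Iic y) :=
  fun _ _ h => measure_mono (Iic_subset_Iic.2 h)

lemma measurable_tail (μ : Measure ℝ) : Measurable fun y => μ (Ici y) :=
  (antitone_tail μ).measurable

lemma measurable_initial (μ : Measure ℝ) : Measurable fun y => μ (Iic y) :=
  (monotone_initial μ).measurable

/-- Tonelli on the half plane `{z ≤ y}`. -/
lemma tonelli_Iic_Ici (κ H : Measure ℝ) [SFinite κ] [SFinite H] (F : ℝ → ℝ≥0∞)
    (hF : Measurable F) :
    ∫⁻ y, F y * H (Iic y) ∂κ = ∫⁻ z, (∫⁻ y in Ici z, F y ∂κ) ∂H := by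
  have hs : MeasurableSet {x : ℝ × ℝ | x.2 ≤ x.1} := measurableSet_le measurable_snd measurable_fst
  have hm : Measurable (Function.uncurry fun y z : ℝ => (Ici z).indicator F y) := by
    have : (Function.uncurry fun y z : ℝ => (Ici z).indicator F y)
        = {x : ℝ × ℝ | x.2 ≤ x.1}.indicator fun x => F x.1 := by
      ext ⟨y, z⟩; simp [indicator]
    rw [this]
    exact (hF.comp measurable_fst).indicator hs
  have := lintegral_lintegral_swap (μ := κ) (ν := H) hm.aemeasurable
  convert this using 1
  · refine lintegral_congr fun y => ?_
    have : (fun z => (Ici z).indicator F y) = (Iic y).indicator fun _ => F y := by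
      ext z; simp [indicator]
    rw [this, lintegral_indicator_const measurableSet_Iic]
  · refine lintegral_congr fun z => ?_
    rw [lintegral_indicator measurableSet_Ici]

/-- Tonelli on the half plane `{z < x}`. -/
lemma tonelli_Iio_Ioi (m H : Measure ℝ) [SFinite m] [SFinite H] (F : ℝ → ℝ≥0∞)
    (hF : Measurable F) :
    ∫⁻ x, (∫⁻ z in Iio x, F z ∂H) ∂m = ∫⁻ z, F z * m (Ioi z) ∂H := by
  have hs : MeasurableSet {x : ℝ × ℝ | x.2 < x.1} := measurableSet_lt measurable_snd measurable_fst
  have hm : Measurable (Function.uncurry fun x z : ℝ => (Iio x).indicator F z) := by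
    have : (Function.uncurry fun x z : ℝ => (Iio x).indicator F z)
        = {x : ℝ × ℝ | x.2 < x.1}.indicator fun x => F x.2 := by
      ext ⟨y, z⟩; simp [indicator]
    rw [this]
    exact (hF.comp measurable_snd).indicator hs
  have := lintegral_lintegral_swap (μ := m) (ν := H) hm.aemeasurable
  convert this using 1
  · refine lintegral_congr fun y => ?_
    rw [lintegral_indicator measurableSet_Iio]
  · refine lintegral_congr fun z => ?_
    have : (fun x => (Iio x).indicator F z) = (Ioi z).indicator fun _ => F z := by
      ext z; simp [indicator]
    rw [this, lintegral_indicator_const measurableSet_Ioi]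

/-- Writing `H (Iic y)` as an integral over `z ≤ y` and exchanging the order, the tail at `y` is
bounded by the tail at `z`. -/
lemma lintegral_rpow_tail_mul_Iic_le (κ H : Measure ℝ) [SFinite κ] [SFinite H] {s : ℝ} (hs : 0 ≤ s) :
    ∫⁻ y, κ (Ici y) ^ s * H (Iic y) ∂κ ≤ ∫⁻ z, κ (Ici z) ^ (1 + s) ∂H := by
  rw [tonelli_Iic_Ici κ H _ ((measurable_tail κ).pow_const s)]
  refine lintegral_mono fun z => ?_
  calc ∫⁻ y in Ici z, κ (Ici y) ^ s ∂κ ≤ ∫⁻ _ in Ici z, κ (Ici z) ^ s ∂κ :=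
        setLIntegral_mono measurable_const fun y hy =>
          ENNReal.rpow_le_rpow (antitone_tail κ hy) hs
    _ = κ (Ici z) ^ (1 + s) := by
        rw [setLIntegral_const, ENNReal.rpow_add_of_nonneg _ _ zero_le_one hs, rpow_one, mul_comm]

/-- At least half of the mass of `[z, ∞)` sits where the tail is at least half of its value
at `z`; this replaces the identity `∫ W ^ s d(-W) = W ^ (1 + s) / (1 + s)`, which fails when
`κ` has atoms. -/
lemma half_tail (κ : Measure ℝ) {s : ℝ} (hs : 0 < s) (z : ℝ) (hz : κ (Ici z) ≠ ∞) :
    κ (Ici z) ^ (1 + s) ≤ 2 ^ (1 + s) * ∫⁻ y in Ici z, κ (Ici y) ^ s ∂κ := by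
  set W := κ (Ici z) with hW
  set S := {y | κ (Ici y) < W / 2} with hSdef
  have hSm : MeasurableSet S := measurableSet_lt (measurable_tail κ) measurable_const
  have hS : κ S ≤ W / 2 := measure_le_of_forall_Ici _ _ _ fun y hy => le_of_lt hy
  have h1 : W / 2 ≤ κ (Ici z \ S) := by
    have h2 : W ≤ κ (Ici z \ S) + W / 2 := by
      calc W ≤ κ ((Ici z \ S) ∪ S) := measure_mono (by intro x hx; by_cases x ∈ S <;> simp_all)
        _ ≤ κ (Ici z \ S) + κ S := measure_union_le _ _
        _ ≤ _ := by gcongr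
    by_contra! hlt
    have : κ (Ici z \ S) + W / 2 < W / 2 + W / 2 :=
      ENNReal.add_lt_add_right (ENNReal.div_ne_top hz (by simp)) hlt
    rw [ENNReal.add_halves] at this
    exact absurd h2 (not_le.2 this)
  have h3 : (W / 2) ^ (1 + s) ≤ ∫⁻ y in Ici z, κ (Ici y) ^ s ∂κ := by
    calc (W / 2) ^ (1 + s) = (W / 2) ^ s * (W / 2) := by
          rw [ENNReal.rpow_add_of_nonneg _ _ zero_le_one hs.le, rpow_one, mul_comm]
      _ ≤ (W / 2) ^ s * κ (Ici z \ S) := by gcongr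
      _ = ∫⁻ _ in Ici z \ S, (W / 2) ^ s ∂κ := by rw [setLIntegral_const]
      _ ≤ ∫⁻ y in Ici z \ S, κ (Ici y) ^ s ∂κ :=
          setLIntegral_mono ((measurable_tail κ).pow_const s) fun y hy =>
            ENNReal.rpow_le_rpow (not_lt.1 hy.2) hs.le
      _ ≤ _ := lintegral_mono_set sdiff_subset
  calc W ^ (1 + s) = 2 ^ (1 + s) * (W / 2) ^ (1 + s) := by
        rw [← ENNReal.mul_rpow_of_nonneg _ _ (by positivity), ENNReal.mul_div_cancel (by simp) (by simp)]
    _ ≤ _ := by gcongr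

/-- The mirror image of `half_tail`. -/
lemma half_initial (H : Measure ℝ) {s : ℝ} (hs : 0 < s) (z : ℝ) (hz : H (Iic z) ≠ ∞) :
    H (Iic z) ^ (1 + s) ≤ 2 ^ (1 + s) * ∫⁻ y in Iic z, H (Iic y) ^ s ∂H := by
  set W := H (Iic z) with hW
  set S := {y | H (Iic y) < W / 2} with hSdef
  have hSm : MeasurableSet S := measurableSet_lt (measurable_initial H) measurable_const
  have hS : H S ≤ W / 2 := measure_le_of_forall_Iic _ _ _ fun y hy => le_of_lt hy
  have h1 : W / 2 ≤ H (Iic z \ S) := by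
    have h2 : W ≤ H (Iic z \ S) + W / 2 := by
      calc W ≤ H ((Iic z \ S) ∪ S) := measure_mono (by intro x hx; by_cases x ∈ S <;> simp_all)
        _ ≤ H (Iic z \ S) + H S := measure_union_le _ _
        _ ≤ _ := by gcongr
    by_contra! hlt
    have : H (Iic z \ S) + W / 2 < W / 2 + W / 2 :=
      ENNReal.add_lt_add_right (ENNReal.div_ne_top hz (by simp)) hlt
    rw [ENNReal.add_halves] at this
    exact absurd h2 (not_le.2 this)
  have h3 : (W / 2) ^ (1 + s) ≤ ∫⁻ y in Iic z, H (Iic y) ^ s ∂H := by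
    calc (W / 2) ^ (1 + s) = (W / 2) ^ s * (W / 2) := by
          rw [ENNReal.rpow_add_of_nonneg _ _ zero_le_one hs.le, rpow_one, mul_comm]
      _ ≤ (W / 2) ^ s * H (Iic z \ S) := by gcongr
      _ = ∫⁻ _ in Iic z \ S, (W / 2) ^ s ∂H := by rw [setLIntegral_const]
      _ ≤ ∫⁻ y in Iic z \ S, H (Iic y) ^ s ∂H :=
          setLIntegral_mono ((measurable_initial H).pow_const s) fun y hy =>
            ENNReal.rpow_le_rpow (not_lt.1 hy.2) hs.le
      _ ≤ _ := lintegral_mono_set sdiff_subset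
  calc W ^ (1 + s) = 2 ^ (1 + s) * (W / 2) ^ (1 + s) := by
        rw [← ENNReal.mul_rpow_of_nonneg _ _ (by positivity), ENNReal.mul_div_cancel (by simp) (by simp)]
    _ ≤ _ := by gcongr

/-- The powers of two below `x` form a geometric series dominated by its largest term; the ratio
is at most `1/2` because `s ≥ 1`. -/
lemma tsum_dyadic_le (x : ℝ≥0∞) {s : ℝ} (hs : 1 ≤ s) :
    ∑' k : ℤ, (if (2 : ℝ≥0∞) ^ k < x then ((2 : ℝ≥0∞) ^ k) ^ s else 0) ≤ 2 * x ^ s := by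
  rcases eq_or_ne x 0 with rfl | h0
  · simp
  rcases eq_or_ne x ∞ with rfl | ht
  · rw [ENNReal.top_rpow_of_pos (by linarith)]; simp
  obtain ⟨n, hn1, hn2⟩ := ENNReal.exists_mem_Ioc_zpow h0 ht one_lt_two (by simp)
  have hinj : Function.Injective fun j : ℕ => n - (j : ℤ) := fun i j h => by
    simp only at h; omega
  rw [← hinj.tsum_eq]
  · calc _ ≤ ∑' j : ℕ, ((2 : ℝ≥0∞) ^ n) ^ s * (2⁻¹) ^ j := by
          refine ENNReal.tsum_le_tsum fun j => ?_
          split_ifs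
          · have e : (2 : ℝ≥0∞) ^ (n - (j : ℤ)) = 2 ^ n * (2⁻¹) ^ j := by
              rw [ENNReal.zpow_sub (by simp) (by simp), zpow_natCast, ENNReal.inv_pow]
            rw [e, ENNReal.mul_rpow_of_nonneg _ _ (by linarith)]
            gcongr
            conv_rhs => rw [← ENNReal.rpow_one ((2⁻¹ : ℝ≥0∞) ^ j)]
            exact ENNReal.rpow_le_rpow_of_exponent_ge (pow_le_one₀ (by simp) (by simp)) hs
          · simp
      _ = ((2 : ℝ≥0∞) ^ n) ^ s * 2 := by
          rw [ENNReal.tsum_mul_left, ENNReal.tsum_geometric, ENNReal.one_sub_inv_two, inv_inv]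
      _ ≤ 2 * x ^ s := by
          rw [mul_comm]; gcongr
  · intro k hk
    have hk' : (2 : ℝ≥0∞) ^ k < x := by
      by_contra h; simp [h] at hk
    have : k < n + 1 := by
      by_contra! h
      exact absurd (hk'.trans_le (hn2.trans (ENNReal.zpow_le_of_le (by simp) h))) (lt_irrefl _)
    exact ⟨(n - k).toNat, by simp; omega⟩

/-! ### The core inequalities -/

/-- Write `W y = κ [y, ∞)` and `h y = H (-∞, y]`. Where `f` dominates `K W ^ (1 / β) h`, the tail
`W` is controlled by `f` itself, and the integral of `f` over that set is estimated on dyadic level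
sets of `f`. On the rest, `f` is at most `K W ^ (1 / β) h` and Tonelli's theorem applies. -/
lemma core_upper (κ m H : Measure ℝ) [SFinite κ] [SFinite H] {β : ℝ} (hβ : 0 < β)
    (f Φ : ℝ → ℝ≥0∞) (hf : Measurable f) (hΦ : Measurable Φ)
    (hfΦ : ∀ᵐ y ∂κ, ∀ x, y < x → f y ≤ Φ x)
    (hH : ∀ᵐ y ∂κ, H (Iic y) = (m (Ioi y) ^ (1 / β))⁻¹) {K : ℝ≥0∞} (hK0 : K ≠ 0) (hK : K ≠ ∞) :
    ∫⁻ y, f y ∂κ ≤ K * ∫⁻ z, κ (Ici z) ^ (1 + 1 / β) ∂H +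
      2 ^ (1 + β) * 2 * (K⁻¹ ^ β * ∫⁻ x, Φ x ^ (1 + β) ∂m) := by
  set A := ∫⁻ x, Φ x ^ (1 + β) ∂m with hA
  have hβ' : 0 ≤ 1 / β := by positivity
  rcases eq_or_ne A ∞ with hAt | hAt
  · have : K⁻¹ ^ β * A = ∞ := by
      rw [hAt, ENNReal.mul_top]
      exact (ENNReal.rpow_pos (by simpa using hK) (by simpa using hK0)).ne'
    rw [this, ENNReal.mul_top (by simp)]; simp
  set R : ℝ → ℝ≥0∞ := fun y => K * (κ (Ici y) ^ (1 / β) * H (Iic y)) with hR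
  have hRm : Measurable R :=
    (((measurable_tail κ).pow_const _).mul (measurable_initial H)).const_mul _
  set D := {y | R y < f y} with hD
  have hDm : MeasurableSet D := measurableSet_lt hRm hf
  rw [← lintegral_add_compl f hDm, add_comm]
  refine add_le_add ?_ ?_
  · calc ∫⁻ y in Dᶜ, f y ∂κ ≤ ∫⁻ y in Dᶜ, R y ∂κ :=
          setLIntegral_mono hRm fun y hy => not_lt.1 hy
      _ ≤ ∫⁻ y, R y ∂κ := setLIntegral_le_lintegral _ _
      _ = K * ∫⁻ y, κ (Ici y) ^ (1 / β) * H (Iic y) ∂κ :=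
          lintegral_const_mul' _ _ hK
      _ ≤ _ := mul_le_mul_right (lintegral_rpow_tail_mul_Iic_le κ H hβ') _
  -- the tail bound at points of `D`
  set G := {y | (∀ x, y < x → f y ≤ Φ x) ∧ H (Iic y) = (m (Ioi y) ^ (1 / β))⁻¹} with hG
  have hGae : ∀ᵐ y ∂κ, y ∈ G := by filter_upwards [hfΦ, hH] with y h1 h2 using ⟨h1, h2⟩
  have key : ∀ y ∈ D ∩ G, κ (Ici y) ≤ K⁻¹ ^ β * (f y ^ β * m (Ioi y)) := by
    rintro y ⟨hy, -, hHy⟩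
    have hy : K * (κ (Ici y) ^ (1 / β) * H (Iic y)) < f y := hy
    have hfy : f y ≠ 0 := (pos_of_gt hy).ne'
    have h1 : κ (Ici y) ^ (1 / β) / (m (Ioi y) ^ (1 / β)) ≤ K⁻¹ * f y := by
      rw [div_eq_mul_inv, ← hHy]
      calc _ = K⁻¹ * (K * (κ (Ici y) ^ (1 / β) * H (Iic y))) := by
            rw [← mul_assoc, ENNReal.inv_mul_cancel hK0 hK, one_mul]
        _ ≤ _ := by gcongr
    have hKf : K⁻¹ * f y ≠ 0 := mul_ne_zero (by simpa using hK) hfy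
    have h2 : κ (Ici y) ^ (1 / β) ≤ K⁻¹ * f y * m (Ioi y) ^ (1 / β) := by
      by_cases hm0 : m (Ioi y) = 0
      · by_cases hft : f y = ∞
        · rw [hHy, hm0] at hy
          rw [hft] at hy
          have : κ (Ici y) = 0 := by
            by_contra h0
            have : K * (κ (Ici y) ^ (1 / β) * ((0 : ℝ≥0∞) ^ (1 / β))⁻¹) = ∞ := by
              rw [ENNReal.zero_rpow_of_pos (by positivity), ENNReal.inv_zero, ENNReal.mul_top,
                ENNReal.mul_top hK0]
              simp [h0, hβ.le]
            exact hy.ne this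
          rw [this, ENNReal.zero_rpow_of_pos (by positivity)]; simp
        · exact (ENNReal.div_le_iff_le_mul (Or.inr (ENNReal.mul_ne_top (by simpa using hK0) hft))
            (Or.inr hKf)).1 h1
      · refine (ENNReal.div_le_iff_le_mul (Or.inl ?_) (Or.inr hKf)).1 h1
        simp [hm0, hβ, hβ.le]
    have h3 := ENNReal.rpow_le_rpow h2 hβ.le
    rw [← ENNReal.rpow_mul, one_div_mul_cancel hβ.ne', rpow_one,
      ENNReal.mul_rpow_of_nonneg _ _ hβ.le, ENNReal.mul_rpow_of_nonneg _ _ hβ.le,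
      ← ENNReal.rpow_mul, one_div_mul_cancel hβ.ne', rpow_one, mul_assoc] at h3
    exact h3
  set Dk : ℤ → Set ℝ := fun k => {y | y ∈ D ∩ G ∧ f y ∈ Ioc ((2 : ℝ≥0∞) ^ k) (2 ^ (k + 1))}
    with hDk
  set Dt : Set ℝ := {y | y ∈ D ∩ G ∧ f y = ∞} with hDt
  have hcov : D ≤ᵐ[κ] ((Dt ∪ ⋃ k, Dk k : Set ℝ)) := by
    filter_upwards [hGae] with y hyG hyD
    by_cases hft : f y = ∞
    · exact Or.inl ⟨⟨hyD, hyG⟩, hft⟩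
    · have hfy : f y ≠ 0 := (pos_of_gt (show R y < f y from hyD)).ne'
      obtain ⟨n, hn⟩ := ENNReal.exists_mem_Ioc_zpow hfy hft one_lt_two (by simp)
      exact Or.inr (mem_iUnion.2 ⟨n, ⟨hyD, hyG⟩, hn⟩)
  -- if `f y = ∞` then `Φ = ∞` on `(y, ∞)`, which is therefore `m`-null
  have hDt0 : κ Dt = 0 := by
    refine le_antisymm (measure_le_of_forall_Ici _ _ _ ?_) zero_le
    rintro y ⟨hy, hft⟩
    have hm : m (Ioi y) = 0 := by
      have hfin : ∀ᵐ x ∂m, Φ x ^ (1 + β) < ∞ := ae_lt_top (hΦ.pow_const _) hAt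
      refine measure_mono_null (fun x hx => ?_) hfin
      have := hy.2.1 x hx
      rw [hft, top_le_iff] at this
      simp [this, ENNReal.top_rpow_of_pos (show 0 < 1 + β by positivity)]
    simpa [hm] using key y hy
  have hk : ∀ k, ∫⁻ y in Dk k, f y ∂κ ≤
      2 ^ (1 + β) * K⁻¹ ^ β * ∫⁻ x, (if (2 : ℝ≥0∞) ^ k < Φ x then ((2 : ℝ≥0∞) ^ k) ^ (1 + β) else 0) ∂m := by
    intro k
    have hmeas : κ (Dk k) ≤ K⁻¹ ^ β * (((2 : ℝ≥0∞) ^ (k + 1)) ^ β * m {x | (2 : ℝ≥0∞) ^ k < Φ x}) := by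
      refine measure_le_of_forall_Ici _ _ _ ?_
      rintro y ⟨hy, hf1, hf2⟩
      refine (key y hy).trans ?_
      gcongr
      exact fun x hx => hf1.trans_le (hy.2.1 x hx)
    have hint : ∫⁻ x, (if (2 : ℝ≥0∞) ^ k < Φ x then ((2 : ℝ≥0∞) ^ k) ^ (1 + β) else 0) ∂m
        = ((2 : ℝ≥0∞) ^ k) ^ (1 + β) * m {x | (2 : ℝ≥0∞) ^ k < Φ x} := by
      rw [← lintegral_indicator_const (measurableSet_lt measurable_const hΦ)]
      simp only [indicator, mem_ofPred_eq]
    have hpow : ((2 : ℝ≥0∞) ^ (k + 1)) * ((2 : ℝ≥0∞) ^ (k + 1)) ^ β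
        = 2 ^ (1 + β) * ((2 : ℝ≥0∞) ^ k) ^ (1 + β) := by
      rw [← ENNReal.mul_rpow_of_nonneg _ _ (by positivity),
        ENNReal.rpow_add_of_nonneg _ _ zero_le_one hβ.le, rpow_one, mul_comm (2 : ℝ≥0∞) (2 ^ k),
        ENNReal.zpow_add (by simp) (by simp), zpow_one]
    calc ∫⁻ y in Dk k, f y ∂κ ≤ ∫⁻ _ in Dk k, (2 : ℝ≥0∞) ^ (k + 1) ∂κ :=
          setLIntegral_mono measurable_const fun y hy => hy.2.2
      _ = 2 ^ (k + 1) * κ (Dk k) := setLIntegral_const _ _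
      _ ≤ 2 ^ (k + 1) * (K⁻¹ ^ β * (((2 : ℝ≥0∞) ^ (k + 1)) ^ β * m {x | (2 : ℝ≥0∞) ^ k < Φ x})) := by
          gcongr
      _ = ((2 : ℝ≥0∞) ^ (k + 1) * ((2 : ℝ≥0∞) ^ (k + 1)) ^ β) * K⁻¹ ^ β * m {x | (2 : ℝ≥0∞) ^ k < Φ x} := by
          ring
      _ = _ := by rw [hpow, hint]; ring
  calc ∫⁻ y in D, f y ∂κ ≤ ∫⁻ y in Dt ∪ ⋃ k, Dk k, f y ∂κ := lintegral_mono_set' hcov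
    _ ≤ ∫⁻ y in Dt, f y ∂κ + ∫⁻ y in ⋃ k, Dk k, f y ∂κ := lintegral_union_le _ _ _
    _ ≤ 0 + ∑' k, ∫⁻ y in Dk k, f y ∂κ :=
        add_le_add (setLIntegral_measure_zero _ _ hDt0).le (lintegral_iUnion_le _ _)
    _ ≤ ∑' k : ℤ, 2 ^ (1 + β) * K⁻¹ ^ β *
        ∫⁻ x, (if (2 : ℝ≥0∞) ^ k < Φ x then ((2 : ℝ≥0∞) ^ k) ^ (1 + β) else 0) ∂m := by
        rw [zero_add]; exact ENNReal.tsum_le_tsum hk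
    _ = 2 ^ (1 + β) * K⁻¹ ^ β *
        ∫⁻ x, ∑' k : ℤ, (if (2 : ℝ≥0∞) ^ k < Φ x then ((2 : ℝ≥0∞) ^ k) ^ (1 + β) else 0) ∂m := by
        rw [ENNReal.tsum_mul_left, lintegral_tsum fun k => ?_]
        exact (Measurable.ite (measurableSet_lt measurable_const hΦ) measurable_const
          measurable_const).aemeasurable
    _ ≤ 2 ^ (1 + β) * K⁻¹ ^ β * ∫⁻ x, 2 * Φ x ^ (1 + β) ∂m := by
        gcongr with x
        exact tsum_dyadic_le _ (by linarith)
    _ = _ := by rw [lintegral_const_mul' _ _ (by simp)]; ring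

/-- The extremal function for the lower bound: the least non-decreasing majorant of
`W ^ (1 / β) h`, where `W y = κ [y, ∞)` and `h y = H (-∞, y]`. -/
def testFun (κ H : Measure ℝ) (β : ℝ) (y : ℝ) : ℝ≥0∞ :=
  ⨆ z : Iic y, κ (Ici (z : ℝ)) ^ (1 / β) * H (Iic (z : ℝ))

lemma testFun_mono (κ H : Measure ℝ) (β : ℝ) : Monotone (testFun κ H β) := fun _ _ hxy =>
  iSup_le fun z => le_iSup (fun z : Iic _ => κ (Ici (z : ℝ)) ^ (1 / β) * H (Iic (z : ℝ)))
    ⟨z.1, z.2.trans hxy⟩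

/-- `testFun` is large enough: by `half_tail`, `W (z) ^ (1 + 1 / β)` is comparable to an integral of
`W ^ (1 / β)` over `[z, ∞)`, and exchanging the order of integration produces `W ^ (1 / β) h`,
which `testFun` dominates. -/
lemma core_lower_left (κ H : Measure ℝ) [SFinite κ] [SFinite H] {β : ℝ} (hβ : 0 < β)
    (hW : ∀ᵐ z ∂H, κ (Ici z) ≠ ∞) :
    ∫⁻ z, κ (Ici z) ^ (1 + 1 / β) ∂H ≤ 2 ^ (1 + 1 / β) * ∫⁻ y, testFun κ H β y ∂κ := by
  calc ∫⁻ z, κ (Ici z) ^ (1 + 1 / β) ∂H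
      ≤ ∫⁻ z, 2 ^ (1 + 1 / β) * ∫⁻ y in Ici z, κ (Ici y) ^ (1 / β) ∂κ ∂H :=
        lintegral_mono_ae (hW.mono fun z hz => half_tail κ (by positivity) z hz)
    _ = 2 ^ (1 + 1 / β) * ∫⁻ y, κ (Ici y) ^ (1 / β) * H (Iic y) ∂κ := by
        rw [lintegral_const_mul' _ _ (by simp), tonelli_Iic_Ici κ H _ ((measurable_tail κ).pow_const _)]
    _ ≤ _ := by
        gcongr with y
        exact le_iSup (fun z : Iic y => κ (Ici (z : ℝ)) ^ (1 / β) * H (Iic (z : ℝ))) ⟨y, self_mem_Iic⟩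

/-- `testFun` is not too large: by `half_initial`, for `z ≤ y` the power
`(W (z) ^ (1 / β) h (z)) ^ (1 + β)` is at most a constant times the integral of
`W ^ (1 + 1 / β) h ^ β` over `(-∞, z]` against `H`, so the supremum over `z` costs only a constant.
Exchanging the order of integration then pairs `h ^ β` with `m (z, ∞)`. -/
lemma core_lower_right (κ m H : Measure ℝ) [SFinite m] [IsFiniteMeasure H] {β : ℝ} (hβ : 0 < β)
    (hH : ∀ᵐ z ∂H, H (Iic z) ^ β * m (Ioi z) ≤ 1) (ψ : ℝ → ℝ≥0∞)
    (hψ : ∀ x M, (∀ y, y < x → testFun κ H β y ≤ M) → ψ x ≤ M) :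
    ∫⁻ x, ψ x ^ (1 + β) ∂m ≤ 2 ^ (1 + β) * ∫⁻ z, κ (Ici z) ^ (1 + 1 / β) ∂H := by
  have hβ1 : 0 < 1 + β := by positivity
  set F : ℝ → ℝ≥0∞ := fun z => κ (Ici z) ^ (1 + 1 / β) * H (Iic z) ^ β with hF
  have hFm : Measurable F := ((measurable_tail κ).pow_const _).mul ((measurable_initial H).pow_const _)
  have h1 : ∀ x, ψ x ^ (1 + β) ≤ 2 ^ (1 + β) * ∫⁻ z in Iio x, F z ∂H := by
    intro x
    rw [← ENNReal.le_rpow_inv_iff hβ1]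
    refine hψ x _ fun y hy => iSup_le fun ⟨z, hz⟩ => ?_
    rw [ENNReal.le_rpow_inv_iff hβ1, ENNReal.mul_rpow_of_nonneg _ _ hβ1.le, ← ENNReal.rpow_mul]
    have e : 1 / β * (1 + β) = 1 + 1 / β := by field_simp; ring
    rw [e]
    calc _ ≤ κ (Ici z) ^ (1 + 1 / β) * (2 ^ (1 + β) * ∫⁻ z' in Iic z, H (Iic z') ^ β ∂H) := by
          gcongr; exact half_initial H hβ z (measure_ne_top _ _)
      _ = 2 ^ (1 + β) * (κ (Ici z) ^ (1 + 1 / β) * ∫⁻ z' in Iic z, H (Iic z') ^ β ∂H) := by ring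
      _ = 2 ^ (1 + β) * ∫⁻ z' in Iic z, κ (Ici z) ^ (1 + 1 / β) * H (Iic z') ^ β ∂H := by
          rw [lintegral_const_mul _ ((measurable_initial H).pow_const _)]
      _ ≤ 2 ^ (1 + β) * ∫⁻ z' in Iic z, F z' ∂H := by
          refine mul_le_mul_right (setLIntegral_mono hFm fun z' hz' => ?_) _
          exact mul_le_mul_left (ENNReal.rpow_le_rpow (antitone_tail κ hz') (by positivity)) _
      _ ≤ 2 ^ (1 + β) * ∫⁻ z' in Iio x, F z' ∂H := by
          gcongr
          exact lt_of_le_of_lt hz hy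
  calc ∫⁻ x, ψ x ^ (1 + β) ∂m ≤ ∫⁻ x, 2 ^ (1 + β) * ∫⁻ z in Iio x, F z ∂H ∂m := lintegral_mono h1
    _ = 2 ^ (1 + β) * ∫⁻ z, F z * m (Ioi z) ∂H := by
        rw [lintegral_const_mul' _ _ (by simp), tonelli_Iio_Ioi m H F hFm]
    _ ≤ _ := by
        refine mul_le_mul_right (lintegral_mono_ae (hH.mono fun z hz => ?_)) _
        calc F z * m (Ioi z) = κ (Ici z) ^ (1 + 1 / β) * (H (Iic z) ^ β * m (Ioi z)) := by
              simp only [hF]; ring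
          _ ≤ κ (Ici z) ^ (1 + 1 / β) * 1 := by gcongr
          _ = _ := mul_one _

/-! ### Essential suprema, norms and the Stieltjes measure -/

lemma eSup_le_of_forall {μ : Measure ℝ} {E : Set ℝ} {f : ℝ → ℝ≥0∞} {M : ℝ≥0∞}
    (h : ∀ y ∈ E, f y ≤ M) : eSup μ E f ≤ M := by
  refine sSup_le fun α hα => ?_
  obtain ⟨y, hy, hαy⟩ := nonempty_of_measure_ne_zero (ne_of_gt hα)
  exact hαy.trans (h y hy)

lemma eSup_le_of_null {μ : Measure ℝ} {E : Set ℝ} {f : ℝ → ℝ≥0∞} {M : ℝ≥0∞}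
    (h : μ {y | y ∈ E ∧ M < f y} = 0) : eSup μ E f ≤ M := by
  refine sSup_le fun α hα => ?_
  by_contra! hlt
  have hs : {y | y ∈ E ∧ α ≤ f y} ⊆ {y | y ∈ E ∧ M < f y} := fun y hy =>
    ⟨hy.1, hlt.trans_le hy.2⟩
  exact (ne_of_gt hα) (measure_mono_null hs h)

lemma eSup_mono_set (μ : Measure ℝ) {E F : Set ℝ} (f : ℝ → ℝ≥0∞) (h : E ⊆ F) :
    eSup μ E f ≤ eSup μ F f := by
  refine sSup_le_sSup fun α hα => ?_
  rw [mem_ofPred_eq] at hα ⊢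
  refine hα.trans_le ?_
  have hs : {y | y ∈ E ∧ α ≤ f y} ⊆ {y | y ∈ F ∧ α ≤ f y} := fun _ hy => ⟨h hy.1, hy.2⟩
  exact measure_mono hs

lemma eSup_lt_null (μ : Measure ℝ) (E : Set ℝ) (f : ℝ → ℝ≥0∞) :
    μ {y | y ∈ E ∧ eSup μ E f < f y} = 0 := by
  obtain ⟨D, hD, hd⟩ := TopologicalSpace.exists_countable_dense ℝ≥0∞
  have : {y | y ∈ E ∧ eSup μ E f < f y} ⊆
      ⋃ α ∈ D ∩ Ioi (eSup μ E f), {y | y ∈ E ∧ α ≤ f y} := by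
    rintro y ⟨hy, hlt⟩
    obtain ⟨α, hαD, hα⟩ := hd.exists_between hlt
    exact mem_biUnion (show α ∈ D ∩ Ioi (eSup μ E f) from ⟨hαD, hα.1⟩) ⟨hy, hα.2.le⟩
  refine measure_mono_null this ((measure_biUnion_null_iff (hD.mono inter_subset_left)).2 ?_)
  rintro α ⟨-, hα⟩
  by_contra hne
  exact absurd (le_sSup (pos_iff_ne_zero.2 hne) : α ≤ eSup μ E f) (not_le.2 hα)

lemma Nrm_mono_set (p : ℝ≥0∞) (μ : Measure ℝ) {E F : Set ℝ} (f : ℝ → ℝ≥0∞) (h : E ⊆ F) :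
    Nrm p μ E f ≤ Nrm p μ F f := by
  unfold Nrm
  split_ifs
  · exact eSup_mono_set μ f h
  · exact ENNReal.rpow_le_rpow (lintegral_mono_set h) (by positivity)

/-- Continuity from below of `E ↦ ‖f‖_{p,E,μ}` along `[s, b) ↑ (y, b)`. -/
lemma Nrm_Ioo_le (p : ℝ≥0∞) (hp : 0 < p) (μ : Measure ℝ) (f : ℝ → ℝ≥0∞) {y b : ℝ} (hyb : y < b)
    {M : ℝ≥0∞} (h : ∀ s ∈ Ioo y b, Nrm p μ (Ico s b) f ≤ M) : Nrm p μ (Ioo y b) f ≤ M := by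
  obtain ⟨v, hv, hvm, hvt⟩ := exists_seq_strictAnti_tendsto' hyb
  have hU : Ioo y b = ⋃ n, Ico (v n) b := by
    ext x
    simp only [mem_Ioo, mem_iUnion, mem_Ico]
    constructor
    · rintro ⟨h1, h2⟩
      obtain ⟨n, hn⟩ := (hvt.eventually (gt_mem_nhds h1)).exists
      exact ⟨n, hn.le, h2⟩
    · rintro ⟨n, h1, h2⟩
      exact ⟨(hvm n).1.trans_le h1, h2⟩
  unfold Nrm at h ⊢
  split_ifs at h ⊢ with hpt
  · refine eSup_le_of_null ?_
    have : {x | x ∈ Ioo y b ∧ M < f x} ⊆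
        ⋃ n, {x | x ∈ Ico (v n) b ∧ eSup μ (Ico (v n) b) f < f x} := by
      rintro x ⟨hx, hM⟩
      rw [hU] at hx
      obtain ⟨n, hn⟩ := mem_iUnion.1 hx
      exact mem_iUnion.2 ⟨n, hn, (h _ (hvm n)).trans_lt hM⟩
    exact measure_mono_null this (measure_iUnion_null fun n => eSup_lt_null _ _ _)
  · have hp' : 0 < p.toReal := ENNReal.toReal_pos hp.ne' hpt
    rw [one_div, ENNReal.rpow_inv_le_iff hp', hU, setLIntegral_iUnion_of_directed]
    · refine iSup_le fun n => ?_
      rw [← ENNReal.rpow_inv_le_iff hp', ← one_div]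
      exact h _ (hvm n)
    · exact directed_of_isDirected_le fun i j hij =>
        Ico_subset_Ico_left (hv.antitone hij)

lemma uNminus_le (q : ℝ≥0∞) (ν : Measure ℝ) {a b y β : ℝ} (u : ℝ → ℝ≥0∞) (hay : a ≤ y)
    (hyβ : y < β) : uNminus q ν a b u β ≤ Nrm q ν (Ioo y b) u := by
  obtain ⟨s, hs1, hs2⟩ := exists_between hyβ
  exact (iInf₂_le s ⟨hay.trans_lt hs1, hs2⟩).trans
    (Nrm_mono_set _ _ _ fun x hx => ⟨hs1.trans_le hx.1, hx.2⟩)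

lemma le_uNminus (q : ℝ≥0∞) (ν : Measure ℝ) (a b β : ℝ) (u : ℝ → ℝ≥0∞) :
    Nrm q ν (Ico β b) u ≤ uNminus q ν a b u β :=
  le_iInf₂ fun _ hs => Nrm_mono_set _ _ _ fun _ hx => ⟨hs.2.le.trans hx.1, hx.2⟩

lemma uNminus_antitone (q : ℝ≥0∞) (ν : Measure ℝ) (a b : ℝ) (u : ℝ → ℝ≥0∞) :
    Antitone (uNminus q ν a b u) := fun _ _ h =>
  le_iInf₂ fun s hs => iInf₂_le s ⟨hs.1, hs.2.trans_le h⟩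

/-- The value at `y+` of the Stieltjes function: `h(y+) = ‖u‖_{q,(y,b),ν}^{-r}`. -/
def hPlus (q r : ℝ≥0∞) (ν : Measure ℝ) (b : ℝ) (u : ℝ → ℝ≥0∞) (y : ℝ) : ℝ≥0∞ :=
  (Nrm q ν (Ioo y b) u ^ r.toReal)⁻¹

/-- The Stieltjes measure on `(a, b)` completed by an atom at `a` of mass `h(a+)`. The atom
accounts for the second summand of `B₂′`. -/
def stielt (q r : ℝ≥0∞) (ν lam : Measure ℝ) (a b : ℝ) (u : ℝ → ℝ≥0∞) : Measure ℝ :=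
  lam.restrict (Ioo a b) + hPlus q r ν b u a • Measure.dirac a

/-- The distribution function of a measure given by increments of `k` on half-open intervals,
with an atom at `a` carrying the limit of `k` at `a+`. Infinite values of `k` are allowed;
increments `∞ - ∞` count as `0`. -/
lemma stieltjes_Iic (lam : Measure ℝ) (k kp : ℝ → ℝ≥0∞) {a b : ℝ} (hk : Monotone k)
    (h1 : ∀ y β, a ≤ y → y < β → β < b → kp y ≤ k β)
    (h2 : ∀ y M, a ≤ y → y < b → (∀ β, y < β → β < b → M ≤ k β) → M ≤ kp y)
    (hlam : ∀ α β, a < α → α ≤ β → β < b → lam (Ico α β) = k β - k α)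
    {y : ℝ} (hay : a ≤ y) (hyb : y < b) :
    lam (Ioc a y) + kp a = kp y := by
  have T : ∀ c β, a ≤ c → c < β → β < b → lam (Ioo c β) ≤ k β - kp c := by
    intro c β hac hcβ hβb
    have : lam (Ioo c β) = lam.restrict (Iio β) (Ioo c β) := by
      rw [Measure.restrict_apply measurableSet_Ioo, inter_eq_left.2 fun x hx => hx.2]
    rw [this]
    refine measure_le_of_forall_Ici _ _ _ fun α hα => ?_
    rw [Measure.restrict_apply measurableSet_Ici, Ici_inter_Iio,
      hlam α β (hac.trans_lt hα.1) hα.2.le hβb]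
    exact tsub_le_tsub_left (h1 c α hac hα.1 (hα.2.trans hβb)) _
  refine le_antisymm ?_ ?_
  · refine h2 y _ hay hyb fun β hyβ hβb => ?_
    have hle : kp a ≤ k β := h1 a β le_rfl (hay.trans_lt hyβ) hβb
    calc lam (Ioc a y) + kp a ≤ (k β - kp a) + kp a := by
          gcongr
          have hs : Ioc a y ⊆ Ioo a β := fun x hx => ⟨hx.1, hx.2.trans_lt hyβ⟩
          exact (measure_mono hs).trans
            (T a β le_rfl (hay.trans_lt hyβ) hβb)
      _ = k β := tsub_add_cancel_of_le hle
  · rcases hay.eq_or_lt with rfl | hay'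
    · simp
    set L := lam (Ioc a y)
    have step : ∀ α, a < α → α ≤ y → kp y ≤ L + k α := by
      intro α haα hαy
      set X := L + k α
      have hβ : ∀ β, y < β → β < b → kp y ≤ X + (k β - kp y) := by
        intro β hyβ hβb
        calc kp y ≤ k β := h1 y β hay hyβ hβb
          _ ≤ (k β - k α) + k α := le_tsub_add
          _ = lam (Ico α β) + k α := by rw [hlam α β haα (hαy.trans hyβ.le) hβb]
          _ ≤ (L + lam (Ioo y β)) + k α := by
              gcongr
              refine (measure_mono fun x hx => ?_).trans (measure_union_le _ _)
              rcases le_or_gt x y with hxy | hxy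
              · exact Or.inl ⟨haα.trans_le hx.1, hxy⟩
              · exact Or.inr ⟨hxy, hx.2⟩
          _ ≤ (L + (k β - kp y)) + k α := by
              gcongr; exact T y β hay hyβ hβb
          _ = X + (k β - kp y) := by ring
      rcases eq_or_ne (kp y) ∞ with ht | ht
      · obtain ⟨β, hyβ, hβb⟩ := exists_between hyb
        simpa [ht] using hβ β hyβ hβb
      · have : (kp y - X) + kp y ≤ kp y := h2 y _ hay hyb fun β hyβ hβb =>
          add_le_of_le_tsub_right_of_le (h1 y β hay hyβ hβb)
            (tsub_le_iff_left.2 (hβ β hyβ hβb))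
        have h0 : kp y - X = 0 := by
          have h3 : (kp y - X) + kp y ≤ 0 + kp y := by simpa using this
          exact le_antisymm (ENNReal.le_of_add_le_add_right ht h3) zero_le
        exact tsub_eq_zero_iff_le.1 h0
    have : kp y - L ≤ kp a := h2 a _ le_rfl (hay'.trans hyb) fun α haα _ => by
      calc kp y - L ≤ k (min α y) :=
            tsub_le_iff_left.2 (step _ (lt_min haα hay') (min_le_right _ _))
        _ ≤ k α := hk (min_le_left _ _)
    exact tsub_le_iff_left.1 this

section
variable {q r : ℝ≥0∞} {ν lam : Measure ℝ} {a b : ℝ} {u : ℝ → ℝ≥0∞}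

lemma stielt_Iic (hq : 0 < q)
    (hlam : ∀ α β : ℝ, a < α → α ≤ β → β < b →
      lam (Ico α β) =
        (uNminus q ν a b u β ^ r.toReal)⁻¹ - (uNminus q ν a b u α ^ r.toReal)⁻¹)
    {y : ℝ} (hay : a ≤ y) (hyb : y < b) (hr : 0 < r.toReal) :
    stielt q r ν lam a b u (Iic y) = hPlus q r ν b u y := by
  have e : Iic y ∩ Ioo a b = Ioc a y := by
    ext x; simp only [mem_inter_iff, mem_Iic, mem_Ioo, mem_Ioc]
    exact ⟨fun h => ⟨h.2.1, h.1⟩, fun h => ⟨h.2, h.1, h.2.trans_lt hyb⟩⟩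
  rw [← stieltjes_Iic lam (fun β => (uNminus q ν a b u β ^ r.toReal)⁻¹) (hPlus q r ν b u)
    ?_ ?_ ?_ hlam hay hyb]
  · rw [stielt, Measure.add_apply, Measure.smul_apply, Measure.restrict_apply measurableSet_Iic, e,
      Measure.dirac_apply' _ measurableSet_Iic]
    simp [hay]
  · exact fun x y hxy => ENNReal.inv_le_inv.2
      (ENNReal.rpow_le_rpow (uNminus_antitone _ _ _ _ _ hxy) hr.le)
  · exact fun y β hay hyβ _ => ENNReal.inv_le_inv.2
      (ENNReal.rpow_le_rpow (uNminus_le _ _ _ hay hyβ) hr.le)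
  · intro y M hay hyb hM
    rw [hPlus, ENNReal.le_inv_iff_le_inv, ← ENNReal.le_rpow_inv_iff hr]
    refine Nrm_Ioo_le q hq ν u hyb fun s hs => ?_
    rw [ENNReal.le_rpow_inv_iff hr, ← ENNReal.le_inv_iff_le_inv]
    exact (hM s hs.1 hs.2).trans (ENNReal.inv_le_inv.2
      (ENNReal.rpow_le_rpow (le_uNminus _ _ _ _ _ _) hr.le))
end

/-! ### Reduction to σ-finite measures -/

/-- Markov's inequality for the antitone function `W ^ t` on `(-∞, y]`. -/
lemma markov_tail (κ H : Measure ℝ) {t : ℝ} (ht : 0 ≤ t) (y : ℝ) :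
    κ (Ici y) ^ t * H (Iic y) ≤ ∫⁻ z, κ (Ici z) ^ t ∂H := by
  calc κ (Ici y) ^ t * H (Iic y) = ∫⁻ _ in Iic y, κ (Ici y) ^ t ∂H := by
        rw [setLIntegral_const]
    _ ≤ ∫⁻ z in Iic y, κ (Ici z) ^ t ∂H :=
        setLIntegral_mono ((measurable_tail κ).pow_const t) fun z hz =>
          ENNReal.rpow_le_rpow (antitone_tail κ hz) ht
    _ ≤ _ := setLIntegral_le_lintegral _ _

/-- Discarding the points beyond the support of `κ` makes both measures σ-finite, without
changing the quantities that enter the estimates. -/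
lemma reduce_sigmaFinite (κ H : Measure ℝ) {a b : ℝ} (hκa : κ (Iic a) = 0) (hκb : κ (Ici b) = 0)
    (hHa : H (Iio a) = 0)
    (hfin : ∀ z ∈ Ico a b, κ (Ici z) ≠ 0 → H (Iic z) ≠ ∞)
    (hW : ∀ z ∈ Ioo a b, κ (Ici z) ≠ ∞) :
    SigmaFinite κ ∧ SigmaFinite (H.restrict {z | κ (Ici z) ≠ 0}) ∧
    (∀ t : ℝ, 0 < t → ∫⁻ z, κ (Ici z) ^ t ∂(H.restrict {z | κ (Ici z) ≠ 0}) =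
      ∫⁻ z, κ (Ici z) ^ t ∂H) ∧
    (∀ᵐ y ∂κ, y ∈ Ioo a b ∧ (H.restrict {z | κ (Ici z) ≠ 0}) (Iic y) = H (Iic y)) ∧
    (∀ᵐ z ∂(H.restrict {z | κ (Ici z) ≠ 0}), z ∈ Ico a b ∧
      (H.restrict {z | κ (Ici z) ≠ 0}) (Iic z) = H (Iic z)) := by
  set P := {z | κ (Ici z) ≠ 0} with hP
  have hPm : MeasurableSet P := (measurable_tail κ) (measurableSet_singleton 0).compl
  have hPb : ∀ z ∈ P, z < b := fun z hz => by
    by_contra! h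
    exact hz (measure_mono_null (Ici_subset_Ici.2 h) hκb)
  have hIic : ∀ y ∈ P, H.restrict P (Iic y) = H (Iic y) := fun y hy => by
    have : Iic y ⊆ P := fun z hz h0 => hy (measure_mono_null (Ici_subset_Ici.2 hz) h0)
    rw [Measure.restrict_apply measurableSet_Iic, inter_eq_left.2 this]
  have hκP : κ Pᶜ = 0 := by
    refine le_antisymm (measure_le_of_forall_Ici κ _ 0 fun y hy => ?_) zero_le
    have : κ (Ici y) = 0 := by simpa [hP] using hy
    exact this.le
  refine ⟨?_, ?_, ?_, ?_, ?_⟩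
  · refine sigmaFinite_of_tails κ a hκa fun z hz => ?_
    rcases lt_or_ge z b with h | h
    · exact (hW z ⟨hz, h⟩).lt_top
    · rw [measure_mono_null (Ici_subset_Ici.2 h) hκb]; simp
  · refine sigmaFinite_restrict_of_Iic H P hPm fun z hz => ?_
    rcases lt_or_ge z a with h | h
    · have hs : Iic z ⊆ Iio a := fun x hx => lt_of_le_of_lt hx h
      rw [measure_mono_null hs hHa]; simp
    · exact (hfin z ⟨h, hPb z hz⟩ hz).lt_top
  · intro t ht
    rw [← lintegral_indicator hPm]
    congr 1
    ext z
    by_cases hz : z ∈ P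
    · simp [hz]
    · have : κ (Ici z) = 0 := by simpa [hP] using hz
      simp [hz, this, ht]
  · have h1 : ∀ᵐ y ∂κ, y ∈ P := hκP
    have h2 : ∀ᵐ y ∂κ, y ∉ Iic a := measure_eq_zero_iff_ae_notMem.1 hκa
    have h3 : ∀ᵐ y ∂κ, y ∉ Ici b := measure_eq_zero_iff_ae_notMem.1 hκb
    filter_upwards [h1, h2, h3] with y h1 h2 h3
    exact ⟨⟨not_le.1 h2, not_le.1 h3⟩, hIic y h1⟩
  · have h2 : ∀ᵐ y ∂(H.restrict P), y ∉ Iio a :=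
      ae_restrict_of_ae (measure_eq_zero_iff_ae_notMem.1 hHa)
    filter_upwards [ae_restrict_mem hPm, h2] with z h1 h2
    exact ⟨⟨not_lt.1 h2, hPb z h1⟩, hIic z h1⟩

/-! ### The upper estimate for abstract measures -/

/-- Choice of the splitting parameter: `K = (A / B) ^ (1 / (1 + β))` balances the two terms. -/
lemma optimize_split {F A B C : ℝ≥0∞} {β : ℝ} (hβ : 0 < β) (hB0 : B ≠ 0) (hB : B ≠ ∞)
    (h : ∀ K : ℝ≥0∞, K ≠ 0 → K ≠ ∞ → F ≤ K * B + C * (K⁻¹ ^ β * A)) :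
    F ≤ (1 + C) * (B ^ (β / (1 + β)) * A ^ (1 / (1 + β))) := by
  have hβ1 : 0 < 1 + β := by positivity
  rcases eq_or_ne A 0 with rfl | hA0
  · have : F ≤ 0 := by
      refine le_of_forall_gt fun ε hε => ?_
      rcases eq_or_ne ε ∞ with rfl | hεt
      · have := h 1 (by simp) (by simp)
        simp only [one_mul, mul_zero, add_zero] at this
        exact this.trans_lt hB.lt_top
      have h2 : F ≤ ε / 2 := by
        refine (h (ε / 2 / B) (ENNReal.div_ne_zero.2 ⟨(ENNReal.half_pos hε.ne').ne', hB⟩)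
          (ENNReal.div_ne_top (ENNReal.div_ne_top hεt (by simp)) hB0)).trans ?_
        rw [mul_zero, mul_zero, add_zero, ENNReal.div_mul_cancel hB0 hB]
      exact h2.trans_lt (ENNReal.half_lt_self hε.ne' hεt)
    exact this.trans zero_le
  rcases eq_or_ne A ∞ with rfl | hA
  · rw [ENNReal.top_rpow_of_pos (by positivity), ENNReal.mul_top, ENNReal.mul_top]
    · simp
    · simp
    · exact (ENNReal.rpow_pos (pos_iff_ne_zero.2 hB0) hB).ne'
  obtain ⟨x, hx⟩ : ∃ x, x = B ^ (1 / (1 + β)) := ⟨_, rfl⟩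
  obtain ⟨y, hy⟩ : ∃ y, y = A ^ (1 / (1 + β)) := ⟨_, rfl⟩
  have hx0 : x ≠ 0 := hx ▸ (ENNReal.rpow_pos (pos_iff_ne_zero.2 hB0) hB).ne'
  have hy0 : y ≠ 0 := hy ▸ (ENNReal.rpow_pos (pos_iff_ne_zero.2 hA0) hA).ne'
  have hxt : x ≠ ∞ := hx ▸ ENNReal.rpow_ne_top_of_nonneg (by positivity) hB
  have hyt : y ≠ ∞ := hy ▸ ENNReal.rpow_ne_top_of_nonneg (by positivity) hA
  have hBx : B = x ^ β * x := by
    conv_rhs => rw [← ENNReal.rpow_one x, ← ENNReal.rpow_mul, one_mul]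
    rw [← ENNReal.rpow_add _ _ hx0 hxt, hx, ← ENNReal.rpow_mul, add_comm β,
      one_div_mul_cancel hβ1.ne', ENNReal.rpow_one]
  have hAy : A = y ^ β * y := by
    conv_rhs => rw [← ENNReal.rpow_one y, ← ENNReal.rpow_mul, one_mul]
    rw [← ENNReal.rpow_add _ _ hy0 hyt, hy, ← ENNReal.rpow_mul, add_comm β,
      one_div_mul_cancel hβ1.ne', ENNReal.rpow_one]
  have hBβ : B ^ (β / (1 + β)) = x ^ β := by
    rw [hx, ← ENNReal.rpow_mul]; congr 1; ring
  have hyβ0 : y ^ β ≠ 0 := (ENNReal.rpow_pos (pos_iff_ne_zero.2 hy0) hyt).ne'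
  have hyβt : y ^ β ≠ ∞ := ENNReal.rpow_ne_top_of_nonneg hβ.le hyt
  refine (h (y / x) (ENNReal.div_ne_zero.2 ⟨hy0, hxt⟩) (ENNReal.div_ne_top hyt hx0)).trans
    (le_of_eq ?_)
  rw [hBβ, ← hy, ENNReal.inv_div (Or.inl hxt) (Or.inl hx0), ENNReal.div_rpow_of_nonneg _ _ hβ.le]
  have e1 : y / x * B = x ^ β * y := by
    rw [hBx, mul_comm (x ^ β) x, ← mul_assoc, ENNReal.div_mul_cancel hx0 hxt, mul_comm]
  have e2 : x ^ β / y ^ β * A = x ^ β * y := by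
    rw [hAy, ← mul_assoc, ENNReal.div_mul_cancel hyβ0 hyβt]
  rw [e1, e2]; ring

lemma eq_zero_of_tail_integral_eq_zero (κ H : Measure ℝ) {a b : ℝ} (hκa : κ (Iic a) = 0)
    (hκb : κ (Ici b) = 0) (hH0 : ∀ z ∈ Ioo a b, H (Iic z) ≠ 0) {t : ℝ} (ht : 0 < t)
    (hB : ∫⁻ z, κ (Ici z) ^ t ∂H = 0) : κ = 0 := by
  have h1 : κ (Ioo a b) ≤ 0 := measure_le_of_forall_Ici κ _ 0 fun y hy => by
    have := markov_tail κ H ht.le y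
    rw [hB, nonpos_iff_eq_zero, mul_eq_zero] at this
    rcases this with h | h
    · exact (((ENNReal.rpow_eq_zero_iff_of_pos ht).1 h)).le
    · exact absurd h (hH0 y hy)
  have h2 : (univ : Set ℝ) ⊆ (Iic a ∪ Ici b) ∪ Ioo a b := fun x _ => by
    simp only [mem_union, mem_Iic, mem_Ici, mem_Ioo]
    by_contra! h
    exact absurd (h.2 h.1.1) (not_le.2 h.1.2)
  rw [← Measure.measure_univ_eq_zero]
  refine measure_mono_null h2 (measure_union_null (measure_union_null hκa hκb) ?_)
  exact le_antisymm h1 zero_le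

section
variable (κ m H : Measure ℝ) {a b : ℝ}

/-- Finiteness of `∫ W ^ t dH` supplies the finiteness hypotheses of `reduce_sigmaFinite`, by
Markov's inequality and the positivity of `H (Iic z)`. -/
lemma markov_consequences (hH0 : ∀ z ∈ Ioo a b, H (Iic z) ≠ 0) {t : ℝ} (ht : 0 < t)
    (hB : ∫⁻ z, κ (Ici z) ^ t ∂H ≠ ∞) :
    (∀ z ∈ Ico a b, κ (Ici z) ≠ 0 → H (Iic z) ≠ ∞) ∧ (∀ z ∈ Ioo a b, κ (Ici z) ≠ ∞) := by
  have hM : ∀ z, κ (Ici z) ^ t * H (Iic z) ≠ ∞ := fun z =>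
    ((markov_tail κ H ht.le z).trans_lt hB.lt_top).ne
  refine ⟨fun z _ h0 ht' => hM z ?_, fun z hz htop => hM z ?_⟩
  · rw [ht', ENNReal.mul_top]
    exact fun h => h0 ((ENNReal.rpow_eq_zero_iff_of_pos ht).1 h)
  · rw [htop, ENNReal.top_rpow_of_pos ht, ENNReal.top_mul (hH0 z hz)]

/-- For `q < ∞` the upper estimate in abstract form, with `f = g ^ p`, `Φ x` the `p`-th power of
`‖g‖_{∞,(a,x),μ}` and `1 + β = q / p`. -/
lemma upper_finite (hκa : κ (Iic a) = 0) (hκb : κ (Ici b) = 0)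
    (hHa : H (Iio a) = 0) {β : ℝ} (hβ : 0 < β)
    (hH : ∀ z ∈ Ico a b, H (Iic z) = (m (Ioi z) ^ (1 / β))⁻¹)
    (hm : ∀ z ∈ Ioo a b, m (Ioi z) ≠ ∞)
    (hB : ∫⁻ z, κ (Ici z) ^ (1 + 1 / β) ∂H ≠ ∞)
    (f Φ : ℝ → ℝ≥0∞) (hf : Measurable f) (hΦ : Measurable Φ)
    (hfΦ : ∀ᵐ y ∂κ, ∀ x, y < x → f y ≤ Φ x) :
    ∫⁻ y, f y ∂κ ≤ (1 + 2 ^ (1 + β) * 2) * ((∫⁻ z, κ (Ici z) ^ (1 + 1 / β) ∂H) ^ (β / (1 + β)) *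
      (∫⁻ x, Φ x ^ (1 + β) ∂m) ^ (1 / (1 + β))) := by
  have ht : 0 < 1 + 1 / β := by positivity
  have hH0 : ∀ z ∈ Ioo a b, H (Iic z) ≠ 0 := fun z hz => by
    rw [hH z ⟨hz.1.le, hz.2⟩]
    exact ENNReal.inv_ne_zero.2 (ENNReal.rpow_ne_top_of_nonneg (by positivity) (hm z hz))
  rcases eq_or_ne (∫⁻ z, κ (Ici z) ^ (1 + 1 / β) ∂H) 0 with hB0 | hB0
  · have := eq_zero_of_tail_integral_eq_zero κ H hκa hκb hH0 ht hB0
    subst this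
    simp
  obtain ⟨hfin, hW⟩ := markov_consequences κ H hH0 ht hB
  obtain ⟨i1, i2, h3, h4, -⟩ := reduce_sigmaFinite κ H hκa hκb hHa hfin hW
  refine optimize_split hβ hB0 hB fun K hK0 hK => ?_
  rw [← h3 _ ht]
  refine core_upper κ m _ hβ f Φ hf hΦ hfΦ ?_ hK0 hK
  filter_upwards [h4] with y hy
  rw [hy.2, hH y ⟨hy.1.1.le, hy.1.2⟩]

/-- For `q = ∞` the upper estimate in abstract form: the right-hand side of the inequality bounds
`f = g ^ p` pointwise by a multiple of `H (Iic y)`, and Tonelli's theorem does the rest. -/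
lemma upper_top (hκa : κ (Iic a) = 0) (hκb : κ (Ici b) = 0)
    (hHa : H (Iio a) = 0)
    (hH0 : ∀ z ∈ Ioo a b, H (Iic z) ≠ 0) (hB : ∫⁻ z, κ (Ici z) ∂H ≠ ∞)
    (f : ℝ → ℝ≥0∞) {C : ℝ≥0∞} (hC : C ≠ ∞)
    (hf : ∀ᵐ y ∂κ, f y ≤ C * H (Iic y)) :
    ∫⁻ y, f y ∂κ ≤ C * ∫⁻ z, κ (Ici z) ∂H := by
  have hB' : ∫⁻ z, κ (Ici z) ^ (1 : ℝ) ∂H ≠ ∞ := by simpa using hB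
  obtain ⟨hfin, hW⟩ := markov_consequences κ H hH0 one_pos hB'
  obtain ⟨i1, i2, h3, h4, -⟩ := reduce_sigmaFinite κ H hκa hκb hHa hfin hW
  have h3 := h3 1 one_pos
  simp only [ENNReal.rpow_one] at h3
  rw [← h3, ← lintegral_const_mul' _ _ hC]
  calc ∫⁻ y, f y ∂κ ≤ ∫⁻ y, C * (H.restrict {z | κ (Ici z) ≠ 0}) (Iic y) ∂κ := by
        refine lintegral_mono_ae ?_
        filter_upwards [hf, h4] with y h1 h2
        rw [h2.2]; exact h1
    _ = _ := by
        rw [tonelli_Iic_Ici κ _ (fun _ => C) measurable_const]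
        simp

end

/-! ### The lower estimate for abstract measures -/

/-- An integral is bounded by `M` once this holds on all sets of finite measure on which the
integral is already known to be finite. -/
lemma exhaust_le (H : Measure ℝ) [SigmaFinite H] (F : ℝ → ℝ≥0∞) (hF : Measurable F)
    (hFt : ∀ᵐ z ∂H, F z ≠ ∞) (M : ℝ≥0∞)
    (h : ∀ S : Set ℝ, MeasurableSet S → H S ≠ ∞ → ∫⁻ z in S, F z ∂H ≠ ∞ →
      ∫⁻ z in S, F z ∂H ≤ M) : ∫⁻ z, F z ∂H ≤ M := by
  set S : ℕ → Set ℝ := fun n => spanningSets H n ∩ {z | F z ≤ n} with hS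
  have hSm : ∀ n, MeasurableSet (S n) := fun n =>
    (measurableSet_spanningSets H n).inter (measurableSet_le hF measurable_const)
  have hSmono : Monotone S := fun i j hij => inter_subset_inter (monotone_spanningSets H hij)
    fun z hz => le_trans (show F z ≤ i from hz) (by exact_mod_cast hij)
  have hcover : ∀ᵐ z ∂H, z ∈ ⋃ n, S n := by
    filter_upwards [hFt] with z hz
    obtain ⟨n, hn⟩ := mem_iUnion.1 ((iUnion_spanningSets H).symm ▸ mem_univ z)
    obtain ⟨k, hk⟩ := ENNReal.exists_nat_gt hz
    refine mem_iUnion.2 ⟨max n k, monotone_spanningSets H (le_max_left n k) hn, ?_⟩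
    exact hk.le.trans (by exact_mod_cast le_max_right n k)
  have hU : (⋃ n, S n) =ᵐ[H] univ := Filter.eventuallyEq_univ.2 hcover
  rw [← setLIntegral_univ, ← setLIntegral_congr hU,
    setLIntegral_iUnion_of_directed _ hSmono.directed_le]
  refine iSup_le fun n => h _ (hSm n) ?_ ?_
  · exact ((measure_mono inter_subset_left).trans_lt (measure_spanningSets_lt_top H n)).ne
  · refine (lt_of_le_of_lt (setLIntegral_mono measurable_const fun z hz => hz.2) ?_).ne
    rw [setLIntegral_const]
    exact ENNReal.mul_lt_top (by simp)
      ((measure_mono inter_subset_left).trans_lt (measure_spanningSets_lt_top H n))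

section
variable (κ H : Measure ℝ) {a b : ℝ}

/-- Here `n z` stands for the tail of `u` beyond `z`, in the form `ν`-norm or measure. The bound
`hκm`, obtained by testing the inequality with indicator functions of `[z, ∞)`, supplies the
finiteness hypotheses of `reduce_sigmaFinite`. At `z = a` the tail of `κ` may be infinite, but then
`H` has no mass at `a`. -/
lemma admissible_consequences (n : ℝ → ℝ≥0∞) {σ τ : ℝ} (hσ : 0 < σ) (hτ : 0 < τ) {C : ℝ≥0∞} (hC : C ≠ ∞)
    (hH : ∀ z ∈ Ico a b, H (Iic z) = (n z ^ σ)⁻¹)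
    (hm : ∀ z ∈ Ioo a b, n z ≠ ∞)
    (hκm : ∀ z ∈ Ico a b, κ (Ici z) ≤ C * n z ^ τ) :
    (∀ z ∈ Ico a b, κ (Ici z) ≠ 0 → H (Iic z) ≠ ∞) ∧ (∀ z ∈ Ioo a b, κ (Ici z) ≠ ∞) ∧
    (∀ᵐ z ∂H, z ∈ Ico a b → κ (Ici z) ≠ ∞) := by
  have hW : ∀ z ∈ Ioo a b, κ (Ici z) ≠ ∞ := fun z hz =>
    ((hκm z ⟨hz.1.le, hz.2⟩).trans_lt (ENNReal.mul_lt_top hC.lt_top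
      (ENNReal.rpow_lt_top_of_nonneg hτ.le (hm z hz)))).ne
  refine ⟨fun z hz h0 htop => h0 ?_, hW, ?_⟩
  · rw [hH z hz, ENNReal.inv_eq_top, ENNReal.rpow_eq_zero_iff_of_pos hσ] at htop
    have := hκm z hz
    rw [htop, ENNReal.zero_rpow_of_pos hτ, mul_zero] at this
    exact le_antisymm this zero_le
  · by_cases hab : a < b ∧ κ (Ici a) = ∞
    · obtain ⟨hab, hκ⟩ := hab
      have hma : n a = ∞ := by
        by_contra h
        have := hκm a ⟨le_rfl, hab⟩
        rw [hκ, top_le_iff] at this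
        exact (ENNReal.mul_lt_top hC.lt_top (ENNReal.rpow_lt_top_of_nonneg hτ.le h)).ne this
      have hHa0 : H (Iic a) = 0 := by
        rw [hH a ⟨le_rfl, hab⟩, hma, ENNReal.top_rpow_of_pos hσ, ENNReal.inv_top]
      filter_upwards [measure_eq_zero_iff_ae_notMem.1 hHa0] with z hz hzab
      exact hW z ⟨not_le.1 hz, hzab.2⟩
    · refine Filter.Eventually.of_forall fun z hz => ?_
      rcases hz.1.eq_or_lt with rfl | h
      · exact fun h => hab ⟨hz.2, h⟩
      · exact hW z ⟨h, hz.2⟩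

/-- For `q < ∞` the lower estimate in abstract form, by testing with `testFun` for restrictions of
`H` to sets of finite measure. `Ψ` stands for `g ^ p ↦ (x ↦ ‖g‖_{∞,(a,x),μ} ^ p)`;
all that matters is that it is dominated by the supremum over `(-∞, x)`. -/
lemma lower_finite (m : Measure ℝ) [SFinite m] (hκa : κ (Iic a) = 0) (hκb : κ (Ici b) = 0)
    (hHa : H (Iio a) = 0) {β : ℝ} (hβ : 0 < β)
    (hH : ∀ z ∈ Ico a b, H (Iic z) = (m (Ioi z) ^ (1 / β))⁻¹)
    (hm : ∀ z ∈ Ioo a b, m (Ioi z) ≠ ∞)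
    (Ψ : (ℝ → ℝ≥0∞) → ℝ → ℝ≥0∞)
    (hΨ : ∀ g x M, (∀ y, y < x → g y ≤ M) → Ψ g x ≤ M)
    {C : ℝ≥0∞} (hC : C ≠ ∞)
    (hineq : ∀ g, Measurable g →
      ∫⁻ y, g y ∂κ ≤ C * (∫⁻ x, Ψ g x ^ (1 + β) ∂m) ^ (1 / (1 + β))) :
    (∫⁻ z, κ (Ici z) ^ (1 + 1 / β) ∂H) ^ (β / (1 + β)) ≤ 2 ^ (1 + 1 / β) * 2 * C := by
  have hβ1 : 0 < 1 + β := by positivity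
  have ht : 0 < 1 + 1 / β := by positivity
  have hκm : ∀ z ∈ Ico a b, κ (Ici z) ≤ C * m (Ioi z) ^ (1 / (1 + β)) := by
    intro z _
    have h1 := hineq ((Ici z).indicator 1) (measurable_one.indicator measurableSet_Ici)
    rw [lintegral_indicator_one measurableSet_Ici] at h1
    refine h1.trans ?_
    gcongr
    calc ∫⁻ x, Ψ ((Ici z).indicator 1) x ^ (1 + β) ∂m ≤ ∫⁻ x, (Ioi z).indicator 1 x ∂m := by
          refine lintegral_mono fun x => ?_
          by_cases hx : z < x
          · rw [indicator_of_mem (show x ∈ Ioi z from hx)]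
            refine ENNReal.rpow_le_one (hΨ _ _ _ fun y _ => ?_) hβ1.le
            exact indicator_le_self' (fun _ _ => zero_le) y
          · have : Ψ ((Ici z).indicator 1) x ≤ 0 := hΨ _ _ _ fun y hy => by
              rw [indicator_of_notMem]
              exact fun h => hx (lt_of_le_of_lt h hy)
            rw [le_antisymm this zero_le, ENNReal.zero_rpow_of_pos hβ1]
            exact zero_le
      _ = m (Ioi z) := lintegral_indicator_one measurableSet_Ioi
  obtain ⟨hfin, hW, hWae⟩ := admissible_consequences κ H (fun z => m (Ioi z)) (σ := 1 / β) (τ := 1 / (1 + β))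
    (by positivity) (by positivity) hC hH hm hκm
  obtain ⟨i1, i2, h3, -, h5⟩ := reduce_sigmaFinite κ H hκa hκb hHa hfin hW
  rw [← h3 _ ht]
  set H' := H.restrict {z | κ (Ici z) ≠ 0} with hH'
  have hWae' : ∀ᵐ z ∂H', κ (Ici z) ≠ ∞ := by
    filter_upwards [ae_restrict_of_ae (s := {z | κ (Ici z) ≠ 0}) hWae, h5] with z h1 h2
    exact h1 h2.1
  have hH'm : ∀ᵐ z ∂H', H' (Iic z) ^ β * m (Ioi z) ≤ 1 := by
    filter_upwards [h5] with z hz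
    rw [hz.2, hH z hz.1, ENNReal.inv_rpow, ← ENNReal.rpow_mul, one_div_mul_cancel hβ.ne',
      ENNReal.rpow_one]
    exact ENNReal.inv_mul_le_one _
  have hinv : β / (1 + β) = ((1 + β) / β)⁻¹ := by rw [inv_div]
  rw [hinv, ENNReal.rpow_inv_le_iff (by positivity)]
  refine exhaust_le H' _ ((measurable_tail κ).pow_const _)
    (hWae'.mono fun z hz => ENNReal.rpow_ne_top_of_nonneg ht.le hz) _ fun S hS hHS hBS => ?_
  rw [← ENNReal.rpow_inv_le_iff (by positivity), ← hinv]
  set B := ∫⁻ z in S, κ (Ici z) ^ (1 + 1 / β) ∂H' with hB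
  rcases eq_or_ne B 0 with hB0 | hB0
  · rw [hB0, ENNReal.zero_rpow_of_pos (by positivity)]; exact zero_le
  have : IsFiniteMeasure (H'.restrict S) := ⟨by simpa using hHS.lt_top⟩
  have hle : ∀ z, (H'.restrict S) (Iic z) ≤ H' (Iic z) := fun z => Measure.restrict_apply_le _ _
  have L := core_lower_left κ (H'.restrict S) hβ (ae_restrict_of_ae hWae')
  have R := core_lower_right κ m (H'.restrict S) hβ ((ae_restrict_of_ae hH'm).mono fun z hz =>
    le_trans (mul_le_mul_left (ENNReal.rpow_le_rpow (hle z) hβ.le) _) hz) _ (hΨ (testFun κ (H'.restrict S) β))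
  have I := hineq _ (testFun_mono κ (H'.restrict S) β).measurable
  rw [← hB] at L R
  have hexp : B ^ (β / (1 + β)) = B / B ^ (1 / (1 + β)) := by
    have e : β / (1 + β) = 1 - 1 / (1 + β) := by field_simp; ring
    rw [e, ENNReal.rpow_sub _ _ hB0 hBS, ENNReal.rpow_one]
  rw [hexp]
  refine ENNReal.div_le_of_le_mul ?_
  calc B ≤ 2 ^ (1 + 1 / β) * (C * (2 ^ (1 + β) * B) ^ (1 / (1 + β))) := by
        refine L.trans ?_
        gcongr
        refine I.trans ?_
        gcongr
    _ = 2 ^ (1 + 1 / β) * 2 * C * B ^ (1 / (1 + β)) := by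
        rw [ENNReal.mul_rpow_of_nonneg _ _ (by positivity), ← ENNReal.rpow_mul,
          mul_one_div_cancel hβ1.ne', ENNReal.rpow_one]
        ring

/-- For `q = ∞` the abstract form of the lower estimate is an identity: the right-hand side is the
`p`-th power of the left-hand side of the inequality for the extremal function. -/
lemma lower_top (hκa : κ (Iic a) = 0) (hκb : κ (Ici b) = 0) (hHa : H (Iio a) = 0)
    (hfin : ∀ z ∈ Ico a b, κ (Ici z) ≠ 0 → H (Iic z) ≠ ∞)
    (hW : ∀ z ∈ Ioo a b, κ (Ici z) ≠ ∞) :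
    ∫⁻ z, κ (Ici z) ∂H = ∫⁻ y, H (Iic y) ∂κ := by
  obtain ⟨i1, i2, h3, h4, -⟩ := reduce_sigmaFinite κ H hκa hκb hHa hfin hW
  have h3 := h3 1 one_pos
  simp only [ENNReal.rpow_one] at h3
  rw [← h3, lintegral_congr_ae (h4.mono fun y hy => hy.2.symm)]
  have := tonelli_Iic_Ici κ (H.restrict {z | κ (Ici z) ≠ 0}) (fun _ => 1) measurable_const
  simpa using this.symm

end

/-! ### The weighted measures -/

/-- The measure `w ^ p dμ` on `(a, b)`, for finite `p`; the exponent enters through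
`p.toReal`. -/
def wMeas (p : ℝ≥0∞) (μ : Measure ℝ) (a b : ℝ) (w : ℝ → ℝ≥0∞) : Measure ℝ :=
  (μ.restrict (Ioo a b)).withDensity fun x => w x ^ p.toReal

section
variable {p : ℝ≥0∞} {μ : Measure ℝ} {a b : ℝ} {w : ℝ → ℝ≥0∞}

lemma wMeas_apply {S : Set ℝ} (hS : MeasurableSet S) :
    wMeas p μ a b w S = ∫⁻ x in S ∩ Ioo a b, w x ^ p.toReal ∂μ := by
  rw [wMeas, withDensity_apply _ hS, Measure.restrict_restrict hS]

lemma wMeas_of_disjoint {S : Set ℝ} (hS : MeasurableSet S) (h : S ∩ Ioo a b = ∅) :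
    wMeas p μ a b w S = 0 := by
  rw [wMeas_apply hS, h]; simp

lemma Nrm_rpow (hp : 0 < p.toReal) (E : Set ℝ) (f : ℝ → ℝ≥0∞) :
    Nrm p μ E f ^ p.toReal = ∫⁻ x in E, f x ^ p.toReal ∂μ := by
  have hpt : p ≠ ∞ := by rintro rfl; simp at hp
  rw [Nrm, if_neg hpt, ← ENNReal.rpow_mul, one_div_mul_cancel hp.ne', ENNReal.rpow_one]

lemma wMeas_eq_Nrm (hp : 0 < p.toReal) {S T : Set ℝ} (hS : MeasurableSet S)
    (h : S ∩ Ioo a b = T) : wMeas p μ a b w S = Nrm p μ T w ^ p.toReal := by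
  rw [wMeas_apply hS, h, Nrm_rpow hp]

lemma wMeas_Iic : wMeas p μ a b w (Iic a) = 0 :=
  wMeas_of_disjoint measurableSet_Iic (by
    ext x; simp only [mem_inter_iff, mem_Iic, mem_Ioo, mem_empty_iff_false, iff_false]
    exact fun h => absurd h.2.1 (not_lt.2 h.1))

lemma wMeas_Ici_right : wMeas p μ a b w (Ici b) = 0 :=
  wMeas_of_disjoint measurableSet_Ici (by
    ext x; simp only [mem_inter_iff, mem_Ici, mem_Ioo, mem_empty_iff_false, iff_false]
    exact fun h => absurd h.2.2 (not_lt.2 h.1))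

lemma wMeas_Ici (hp : 0 < p.toReal) {z : ℝ} (hz : a < z) :
    wMeas p μ a b w (Ici z) = Nrm p μ (Ico z b) w ^ p.toReal :=
  wMeas_eq_Nrm hp measurableSet_Ici (by
    ext x; simp only [mem_inter_iff, mem_Ici, mem_Ioo, mem_Ico]
    exact ⟨fun h => ⟨h.1, h.2.2⟩, fun h => ⟨h.1, hz.trans_le h.1, h.2⟩⟩)

lemma wMeas_Ici_left (hp : 0 < p.toReal) :
    wMeas p μ a b w (Ici a) = Nrm p μ (Ioo a b) w ^ p.toReal :=
  wMeas_eq_Nrm hp measurableSet_Ici (inter_eq_right.2 fun _ hx => hx.1.le)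

lemma wMeas_Ioi (hp : 0 < p.toReal) {z : ℝ} (hz : a ≤ z) :
    wMeas p μ a b w (Ioi z) = Nrm p μ (Ioo z b) w ^ p.toReal :=
  wMeas_eq_Nrm hp measurableSet_Ioi (by
    ext x; simp only [mem_inter_iff, mem_Ioi, mem_Ioo]
    exact ⟨fun h => ⟨h.1, h.2.2⟩, fun h => ⟨h.1, hz.trans_lt h.1, h.2⟩⟩)

lemma lintegral_wMeas (hp : 0 < p.toReal) (hw : Measurable w) {g : ℝ → ℝ≥0∞} (hg : Measurable g) :
    ∫⁻ x, g x ^ p.toReal ∂(wMeas p μ a b w) =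
      Nrm p μ (Ioo a b) (fun x => g x * w x) ^ p.toReal := by
  rw [Nrm_rpow hp, wMeas, lintegral_withDensity_eq_lintegral_mul _ (hw.pow_const _)
    (hg.pow_const _)]
  refine lintegral_congr fun x => ?_
  simp only [Pi.mul_apply]
  rw [ENNReal.mul_rpow_of_nonneg _ _ hp.le, mul_comm]

lemma ae_wMeas {Q : ℝ → Prop} (h : ∀ᵐ x ∂μ.restrict (Ioo a b), Q x) :
    ∀ᵐ x ∂(wMeas p μ a b w), Q x :=
  (withDensity_absolutelyContinuous _ _).ae_le h

/-- For almost every `y` the bound `g y ≤ ‖g‖_{∞,(a,x),μ}` holds simultaneously for all `x > y`. -/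
lemma ae_le_eSup_left (g : ℝ → ℝ≥0∞) :
    ∀ᵐ y ∂μ.restrict (Ioo a b), ∀ x, y < x → g y ≤ eSup μ (Ioo a x) g := by
  have h1 : ∀ᵐ y ∂μ.restrict (Ioo a b), ∀ s : ℚ,
      ¬(y ∈ Ioo a (s : ℝ) ∧ eSup μ (Ioo a (s : ℝ)) g < g y) :=
    ae_restrict_of_ae (ae_all_iff.2 fun s => measure_eq_zero_iff_ae_notMem.1 (eSup_lt_null _ _ _))
  filter_upwards [h1, ae_restrict_mem measurableSet_Ioo] with y h1 hy x hyx
  obtain ⟨s, hs1, hs2⟩ := exists_rat_btwn hyx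
  exact (not_lt.1 fun h => h1 s ⟨⟨hy.1, hs1⟩, h⟩).trans
    (eSup_mono_set μ g (Ioo_subset_Ioo_right hs2.le))

/-- For almost every `x` the bound `u x ≤ ‖u‖_{∞,(y,b),μ}` holds simultaneously for all `y < x`. -/
lemma ae_le_eSup_right (u : ℝ → ℝ≥0∞) :
    ∀ᵐ x ∂μ.restrict (Ioo a b), ∀ y, y < x → u x ≤ eSup μ (Ioo y b) u := by
  have h1 : ∀ᵐ x ∂μ.restrict (Ioo a b), ∀ s : ℚ,
      ¬(x ∈ Ioo (s : ℝ) b ∧ eSup μ (Ioo (s : ℝ) b) u < u x) :=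
    ae_restrict_of_ae (ae_all_iff.2 fun s => measure_eq_zero_iff_ae_notMem.1 (eSup_lt_null _ _ _))
  filter_upwards [h1, ae_restrict_mem measurableSet_Ioo] with x h1 hx y hyx
  obtain ⟨s, hs1, hs2⟩ := exists_rat_btwn hyx
  exact (not_lt.1 fun h => h1 s ⟨⟨hs2, hx.2⟩, h⟩).trans
    (eSup_mono_set μ u (Ioo_subset_Ioo_left hs1.le))

lemma eSup_left_mono (g : ℝ → ℝ≥0∞) : Monotone fun x => eSup μ (Ioo a x) g :=
  fun _ _ h => eSup_mono_set μ g (Ioo_subset_Ioo_right h)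

lemma eSup_left_le {g : ℝ → ℝ≥0∞} {x : ℝ} {M : ℝ≥0∞} (h : ∀ y, y < x → g y ≤ M) :
    eSup μ (Ioo a x) g ≤ M :=
  eSup_le_of_forall fun y hy => h y hy.2

end

section
variable {p q r : ℝ≥0∞} {a b : ℝ} {μ ν lam : Measure ℝ} {w u : ℝ → ℝ≥0∞}

/-- The `r`-th power of `B₂′`, up to constants: both summands are contained in one integral
because `stielt` has an atom at `a`. -/
def tailInt (p q r : ℝ≥0∞) (a b : ℝ) (μ ν lam : Measure ℝ) (w u : ℝ → ℝ≥0∞) : ℝ≥0∞ :=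
  ∫⁻ z, wMeas p μ a b w (Ici z) ^ (r.toReal / p.toReal) ∂(stielt q r ν lam a b u)

lemma tailInt_eq (hp : 0 < p.toReal) (hr : 0 < r.toReal) :
    tailInt p q r a b μ ν lam w u =
      (∫⁻ x in Ioo a b, Nrm p μ (Ico x b) w ^ r.toReal ∂lam) +
        (Nrm p μ (Ioo a b) w * (Nrm q ν (Ioo a b) u)⁻¹) ^ r.toReal := by
  have e : p.toReal * (r.toReal / p.toReal) = r.toReal := by field_simp
  rw [tailInt, stielt, lintegral_add_measure, lintegral_smul_measure,
    lintegral_dirac' _ ((measurable_tail _).pow_const _), wMeas_Ici_left hp, ← ENNReal.rpow_mul, e,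
    ENNReal.mul_rpow_of_nonneg _ _ hr.le, ENNReal.inv_rpow, hPlus, smul_eq_mul, mul_comm (_⁻¹)]
  congr 1
  refine setLIntegral_congr_fun measurableSet_Ioo fun x hx => ?_
  rw [wMeas_Ici hp hx.1, ← ENNReal.rpow_mul, e]

lemma tailInt_rpow_le (hp : 0 < p.toReal) (hr : 0 < r.toReal) :
    tailInt p q r a b μ ν lam w u ^ (1 / r.toReal) ≤ 2 ^ (1 / r.toReal) *
      ((∫⁻ x in Ioo a b, Nrm p μ (Ico x b) w ^ r.toReal ∂lam) ^ (1 / r.toReal) +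
        Nrm p μ (Ioo a b) w * (Nrm q ν (Ioo a b) u)⁻¹) := by
  rw [tailInt_eq hp hr]
  set J := ∫⁻ x in Ioo a b, Nrm p μ (Ico x b) w ^ r.toReal ∂lam
  set Y := Nrm p μ (Ioo a b) w * (Nrm q ν (Ioo a b) u)⁻¹
  have h1 : J ≤ (J ^ (1 / r.toReal) + Y) ^ r.toReal := by
    calc J = (J ^ (1 / r.toReal)) ^ r.toReal := by
          rw [← ENNReal.rpow_mul, one_div_mul_cancel hr.ne', ENNReal.rpow_one]
      _ ≤ _ := ENNReal.rpow_le_rpow le_self_add hr.le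
  have h2 : Y ^ r.toReal ≤ (J ^ (1 / r.toReal) + Y) ^ r.toReal :=
    ENNReal.rpow_le_rpow le_add_self hr.le
  have h3 := add_le_add h1 h2
  rw [← two_mul] at h3
  refine (ENNReal.rpow_le_rpow h3 (by positivity)).trans_eq ?_
  rw [ENNReal.mul_rpow_of_nonneg _ _ (by positivity), ← ENNReal.rpow_mul,
    mul_one_div_cancel hr.ne', ENNReal.rpow_one]

lemma le_tailInt_rpow (hp : 0 < p.toReal) (hr : 0 < r.toReal) :
    (∫⁻ x in Ioo a b, Nrm p μ (Ico x b) w ^ r.toReal ∂lam) ^ (1 / r.toReal) +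
        Nrm p μ (Ioo a b) w * (Nrm q ν (Ioo a b) u)⁻¹ ≤
      2 * tailInt p q r a b μ ν lam w u ^ (1 / r.toReal) := by
  rw [tailInt_eq hp hr, two_mul]
  refine add_le_add (ENNReal.rpow_le_rpow le_self_add (by positivity)) ?_
  rw [one_div, ENNReal.le_rpow_inv_iff hr]
  exact le_add_self

lemma stielt_Iio : stielt q r ν lam a b u (Iio a) = 0 := by
  have e : Iio a ∩ Ioo a b = ∅ := by
    ext x; simp only [mem_inter_iff, mem_Iio, mem_Ioo, mem_empty_iff_false, iff_false]
    exact fun h => absurd h.2.1 (not_lt.2 h.1.le)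
  rw [stielt, Measure.add_apply, Measure.smul_apply, Measure.restrict_apply measurableSet_Iio, e,
    Measure.dirac_apply' _ measurableSet_Iio]
  simp

lemma Nrm_Ioo_lt_top (hu : ∀ t ∈ Ioo a b, Nrm q ν (Ico t b) u < ⊤) {z : ℝ} (hz : z ∈ Ioo a b) :
    Nrm q ν (Ioo z b) u ≠ ∞ :=
  ((Nrm_mono_set q ν u Ioo_subset_Ico_self).trans_lt (hu z hz)).ne

end

/-! ### The two estimates in terms of `u` and `w` -/

section
variable {p q r : ℝ≥0∞} {a b : ℝ} {μ ν lam : Measure ℝ} {w u : ℝ → ℝ≥0∞}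

lemma exponents_pos (hp : 0 < p) (hpq : p < q) (hr : r⁻¹ = p⁻¹ - q⁻¹) :
    0 < p.toReal ∧ 0 < r.toReal := by
  have hpt : p ≠ ∞ := (hpq.trans_le le_top).ne
  refine ⟨ENNReal.toReal_pos hp.ne' hpt, ENNReal.toReal_pos ?_ ?_⟩
  · rintro rfl
    rw [ENNReal.inv_zero] at hr
    have : p⁻¹ = ∞ := top_le_iff.1 (hr ▸ tsub_le_self)
    exact hp.ne' (ENNReal.inv_eq_top.1 this)
  · rintro rfl
    rw [ENNReal.inv_top] at hr
    exact absurd (tsub_eq_zero_iff_le.1 hr.symm) (not_le.2 (ENNReal.inv_lt_inv.2 hpq))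

/-- The relations between the exponents in terms of `β = q / r`: `r / p = 1 + 1 / β` and
`p (1 + β) = q`. -/
lemma exponents_finite (hp : 0 < p) (hpq : p < q) (hr : r⁻¹ = p⁻¹ - q⁻¹) (hq : q ≠ ∞) :
    0 < q.toReal ∧ r.toReal / p.toReal = 1 + 1 / (q.toReal / r.toReal) ∧
      p.toReal * (1 + q.toReal / r.toReal) = q.toReal := by
  obtain ⟨hP, hR⟩ := exponents_pos hp hpq hr
  have hQ : 0 < q.toReal := ENNReal.toReal_pos (hp.trans hpq).ne' hq
  have h : r.toReal⁻¹ = p.toReal⁻¹ - q.toReal⁻¹ := by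
    rw [← ENNReal.toReal_inv, hr, ENNReal.toReal_sub_of_le (ENNReal.inv_le_inv.2 hpq.le)
      (ENNReal.inv_ne_top.2 hp.ne'), ENNReal.toReal_inv, ENNReal.toReal_inv]
  have h' : p.toReal * q.toReal = r.toReal * (q.toReal - p.toReal) := by
    field_simp at h
    linarith
  refine ⟨hQ, ?_, ?_⟩
  · field_simp
    linarith
  · field_simp
    linarith

/-- The hypotheses on the data `q, r, a, b, ν, u, lam` other than measurability. -/
structure Data (q r : ℝ≥0∞) (a b : ℝ) (ν lam : Measure ℝ) (u : ℝ → ℝ≥0∞) : Prop where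
  hu : ∀ t ∈ Ioo a b, Nrm q ν (Ico t b) u < ⊤
  hlam : ∀ α β : ℝ, a < α → α ≤ β → β < b →
    lam (Ico α β) = (uNminus q ν a b u β ^ r.toReal)⁻¹ - (uNminus q ν a b u α ^ r.toReal)⁻¹

lemma upper_concrete_finite (hp : 0 < p) (hpq : p < q) (hr : r⁻¹ = p⁻¹ - q⁻¹) (hq : q ≠ ∞)
    (hw : Measurable w) (hu : Measurable u) (hd : Data q r a b ν lam u)
    (hB : tailInt p q r a b μ ν lam w u ≠ ∞) {g : ℝ → ℝ≥0∞} (hg : Measurable g) :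
    Nrm p μ (Ioo a b) (fun t => g t * w t) ≤
      (1 + 2 ^ (1 + q.toReal / r.toReal) * 2) ^ (1 / p.toReal) *
        (tailInt p q r a b μ ν lam w u ^ (1 / r.toReal) * RHSdual q a b μ ν u g) := by
  obtain ⟨hP, hR⟩ := exponents_pos hp hpq hr
  obtain ⟨hQ, e1, e2⟩ := exponents_finite hp hpq hr hq
  set β := q.toReal / r.toReal with hβdef
  have hβ : 0 < β := by positivity
  have hm : ∀ z, a ≤ z → wMeas q ν a b u (Ioi z) = Nrm q ν (Ioo z b) u ^ q.toReal :=
    fun z hz => wMeas_Ioi hQ hz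
  have hH : ∀ z ∈ Ico a b, stielt q r ν lam a b u (Iic z) =
      (wMeas q ν a b u (Ioi z) ^ (1 / β))⁻¹ := fun z hz => by
    rw [stielt_Iic (hp.trans hpq) hd.hlam hz.1 hz.2 hR, hm z hz.1, hPlus, ← ENNReal.rpow_mul]
    congr 2
    rw [hβdef]; field_simp
  rw [tailInt, e1] at hB ⊢
  have key := upper_finite (wMeas p μ a b w) (wMeas q ν a b u) (stielt q r ν lam a b u)
    wMeas_Iic wMeas_Ici_right stielt_Iio hβ hH
    (fun z hz => by
      rw [hm z hz.1.le]
      exact ENNReal.rpow_ne_top_of_nonneg hQ.le (Nrm_Ioo_lt_top hd.hu hz)) hB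
    (fun y => g y ^ p.toReal) (fun x => eSup μ (Ioo a x) g ^ p.toReal) (hg.pow_const _)
    ((eSup_left_mono g).measurable.pow_const _)
    (ae_wMeas ((ae_le_eSup_left g).mono fun y hy x hyx => ENNReal.rpow_le_rpow (hy x hyx) hP.le))
  rw [lintegral_wMeas hP hw hg] at key
  have hA : ∫⁻ x, (eSup μ (Ioo a x) g ^ p.toReal) ^ (1 + β) ∂(wMeas q ν a b u) =
      RHSdual q a b μ ν u g ^ q.toReal := by
    simp_rw [← ENNReal.rpow_mul, e2]
    rw [lintegral_wMeas hQ hu (eSup_left_mono g).measurable, RHSdual]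
    simp_rw [mul_comm]
  rw [hA] at key
  have e3 : q.toReal * (1 / (1 + β)) = p.toReal := by
    rw [← e2]; field_simp
  have e4 : β / (1 + β) = 1 / r.toReal * p.toReal := by
    rw [hβdef] at e3 ⊢
    field_simp at e3 ⊢
    exact e3
  rw [← ENNReal.rpow_mul, e3, e4, ENNReal.rpow_mul, ← ENNReal.mul_rpow_of_nonneg _ _ hP.le] at key
  have := ENNReal.rpow_le_rpow key (z := 1 / p.toReal) (by positivity)
  rwa [ENNReal.mul_rpow_of_nonneg _ _ (by positivity), ← ENNReal.rpow_mul, ← ENNReal.rpow_mul,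
    mul_one_div_cancel hP.ne', ENNReal.rpow_one, ENNReal.rpow_one] at this

lemma lower_concrete_finite (hp : 0 < p) (hpq : p < q) (hr : r⁻¹ = p⁻¹ - q⁻¹) (hq : q ≠ ∞)
    (hw : Measurable w) (hu : Measurable u) (hd : Data q r a b ν lam u) {c : ℝ≥0∞} (hc : c ≠ ∞)
    (h : ∀ g : ℝ → ℝ≥0∞, Measurable g →
      Nrm p μ (Ioo a b) (fun t => g t * w t) ≤ c * RHSdual q a b μ ν u g) :
    tailInt p q r a b μ ν lam w u ^ (1 / r.toReal) ≤
      (2 ^ (1 + 1 / (q.toReal / r.toReal)) * 2) ^ (1 / p.toReal) * c := by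
  obtain ⟨hP, hR⟩ := exponents_pos hp hpq hr
  obtain ⟨hQ, e1, e2⟩ := exponents_finite hp hpq hr hq
  set β := q.toReal / r.toReal with hβdef
  have hβ : 0 < β := by positivity
  have hm : ∀ z, a ≤ z → wMeas q ν a b u (Ioi z) = Nrm q ν (Ioo z b) u ^ q.toReal :=
    fun z hz => wMeas_Ioi hQ hz
  have hH : ∀ z ∈ Ico a b, stielt q r ν lam a b u (Iic z) =
      (wMeas q ν a b u (Ioi z) ^ (1 / β))⁻¹ := fun z hz => by
    rw [stielt_Iic (hp.trans hpq) hd.hlam hz.1 hz.2 hR, hm z hz.1, hPlus, ← ENNReal.rpow_mul]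
    congr 2
    rw [hβdef]; field_simp
  have hmfin : ∀ z ∈ Ioo a b, wMeas q ν a b u (Ioi z) ≠ ∞ := fun z hz => by
    rw [hm z hz.1.le]
    exact ENNReal.rpow_ne_top_of_nonneg hQ.le (Nrm_Ioo_lt_top hd.hu hz)
  have e3 : q.toReal * (1 / (1 + β)) = p.toReal := by
    rw [← e2]; field_simp
  have e4 : β / (1 + β) = 1 / r.toReal * p.toReal := by
    rw [hβdef] at e3 ⊢
    field_simp at e3 ⊢
    exact e3
  have : SigmaFinite (wMeas q ν a b u) := sigmaFinite_of_tails _ a wMeas_Iic fun z hz => by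
    rcases lt_or_ge z b with hzb | hzb
    · rw [wMeas_Ici hQ hz]
      exact ENNReal.rpow_lt_top_of_nonneg hQ.le (hd.hu z ⟨hz, hzb⟩).ne
    · rw [measure_mono_null (Ici_subset_Ici.2 hzb) wMeas_Ici_right]; simp
  have key := lower_finite (wMeas p μ a b w) (stielt q r ν lam a b u) (wMeas q ν a b u)
    wMeas_Iic wMeas_Ici_right stielt_Iio hβ hH hmfin
    (fun g x => eSup μ (Ioo a x) (fun y => g y ^ (1 / p.toReal)) ^ p.toReal)
    (fun g x M hM => by
      rw [← ENNReal.le_rpow_inv_iff hP, ← one_div]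
      exact eSup_left_le fun y hy => ENNReal.rpow_le_rpow (hM y hy) (by positivity))
    (C := c ^ p.toReal) (ENNReal.rpow_ne_top_of_nonneg hP.le hc)
    (fun g hg => by
      have hg' : Measurable fun y => g y ^ (1 / p.toReal) := hg.pow_const _
      have h1 := ENNReal.rpow_le_rpow (h _ hg') hP.le
      rw [← lintegral_wMeas hP hw hg', ENNReal.mul_rpow_of_nonneg _ _ hP.le] at h1
      have h2 : ∀ y, (g y ^ (1 / p.toReal)) ^ p.toReal = g y := fun y => by
        rw [← ENNReal.rpow_mul, one_div_mul_cancel hP.ne', ENNReal.rpow_one]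
      simp_rw [h2] at h1
      refine h1.trans_eq ?_
      congr 1
      simp_rw [← ENNReal.rpow_mul, e2]
      rw [lintegral_wMeas hQ hu (eSup_left_mono _).measurable, ← ENNReal.rpow_mul, e3, RHSdual]
      simp_rw [mul_comm])
  rw [tailInt, e1]
  rw [e4, ENNReal.rpow_mul] at key
  have := ENNReal.rpow_le_rpow key (z := 1 / p.toReal) (by positivity)
  rwa [ENNReal.mul_rpow_of_nonneg _ _ (by positivity), ← ENNReal.rpow_mul _ p.toReal,
    ← ENNReal.rpow_mul c,
    mul_one_div_cancel hP.ne', ENNReal.rpow_one, ENNReal.rpow_one] at this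

end

/-! ### The two estimates for infinite `q` -/

section
variable {p r : ℝ≥0∞} {a b : ℝ} {μ ν lam : Measure ℝ} {w u : ℝ → ℝ≥0∞}

lemma RHSdual_top (g : ℝ → ℝ≥0∞) : RHSdual ⊤ a b μ ν u g =
    eSup ν (Ioo a b) (fun x => u x * eSup μ (Ioo a x) g) := by
  simp [RHSdual, Nrm]

lemma Nrm_top (E : Set ℝ) (f : ℝ → ℝ≥0∞) : Nrm ⊤ μ E f = eSup μ E f := by
  simp [Nrm]

/-- Pointwise form of the right-hand side for `q = ∞`. -/
lemma mul_tail_le_RHSdual_top {g : ℝ → ℝ≥0∞} {y : ℝ} {c : ℝ≥0∞} (hc : c ≠ ∞) (hay : a ≤ y)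
    (hy : ∀ x, y < x → g y ≤ eSup μ (Ioo a x) g) (hR : RHSdual ⊤ a b μ ν u g ≤ c) :
    g y * eSup ν (Ioo y b) u ≤ c := by
  have hnull : ν {x | x ∈ Ioo y b ∧ c < u x * g y} = 0 := by
    have hs : {x | x ∈ Ioo y b ∧ c < u x * g y} ⊆
        {x | x ∈ Ioo a b ∧ eSup ν (Ioo a b) (fun x => u x * eSup μ (Ioo a x) g) <
          u x * eSup μ (Ioo a x) g} := fun x hx =>
      ⟨⟨hay.trans_lt hx.1.1, hx.1.2⟩, by
        rw [← RHSdual_top]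
        exact hR.trans_lt (hx.2.trans_le (mul_le_mul_right (hy x hx.1.1) _))⟩
    exact measure_mono_null hs (eSup_lt_null _ _ _)
  rcases eq_or_ne (g y) 0 with h0 | h0
  · simp [h0]
  rcases eq_or_ne (g y) ∞ with ht | ht
  · have : eSup ν (Ioo y b) u ≤ 0 := by
      have hs : {x | x ∈ Ioo y b ∧ 0 < u x} ⊆ {x | x ∈ Ioo y b ∧ c < u x * g y} := fun x hx =>
        ⟨hx.1, by rw [ht, ENNReal.mul_top hx.2.ne']; exact hc.lt_top⟩
      exact eSup_le_of_null (measure_mono_null hs hnull)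
    rw [le_antisymm this zero_le, mul_zero]; exact zero_le
  · rw [mul_comm, ← ENNReal.le_div_iff_mul_le (Or.inl h0) (Or.inl ht)]
    have hs : {x | x ∈ Ioo y b ∧ c / g y < u x} ⊆ {x | x ∈ Ioo y b ∧ c < u x * g y} :=
      fun x hx => ⟨hx.1, (ENNReal.div_lt_iff (Or.inl h0) (Or.inl ht)).1 hx.2⟩
    exact eSup_le_of_null (measure_mono_null hs hnull)

lemma upper_concrete_top (hp : 0 < p) (hpq : p < ⊤) (hr : r⁻¹ = p⁻¹ - ⊤⁻¹)
    (hw : Measurable w) (hd : Data ⊤ r a b ν lam u)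
    (hB : tailInt p ⊤ r a b μ ν lam w u ≠ ∞) {g : ℝ → ℝ≥0∞} (hg : Measurable g) :
    Nrm p μ (Ioo a b) (fun t => g t * w t) ≤
      tailInt p ⊤ r a b μ ν lam w u ^ (1 / r.toReal) * RHSdual ⊤ a b μ ν u g := by
  obtain ⟨hP, -⟩ := exponents_pos hp hpq hr
  obtain rfl : r = p := by simpa using hr
  have hH : ∀ z ∈ Ico a b, stielt ⊤ r ν lam a b u (Iic z) =
      (eSup ν (Ioo z b) u ^ r.toReal)⁻¹ := fun z hz => by
    rw [stielt_Iic (hp.trans hpq) hd.hlam hz.1 hz.2 hP, hPlus, Nrm_top]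
  have hN : ∀ z ∈ Ioo a b, eSup ν (Ioo z b) u ≠ ∞ := fun z hz => by
    have := Nrm_Ioo_lt_top hd.hu hz
    rwa [Nrm_top] at this
  have hH0 : ∀ z ∈ Ioo a b, stielt ⊤ r ν lam a b u (Iic z) ≠ 0 := fun z hz => by
    rw [hH z ⟨hz.1.le, hz.2⟩]
    exact ENNReal.inv_ne_zero.2 (ENNReal.rpow_ne_top_of_nonneg hP.le (hN z hz))
  set B := tailInt r ⊤ r a b μ ν lam w u with hBdef
  have hB1 : ∫⁻ z, wMeas r μ a b w (Ici z) ∂(stielt ⊤ r ν lam a b u) = B := by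
    rw [hBdef, tailInt, div_self hP.ne']
    simp
  rcases eq_or_ne B 0 with hB0 | hB0
  · have hκ := eq_zero_of_tail_integral_eq_zero (wMeas r μ a b w) (stielt ⊤ r ν lam a b u)
      wMeas_Iic wMeas_Ici_right hH0 one_pos (by simpa [hB1] using hB0)
    have := lintegral_wMeas (μ := μ) (a := a) (b := b) hP hw hg
    rw [hκ, lintegral_zero_measure] at this
    rw [(ENNReal.rpow_eq_zero_iff_of_pos hP).1 this.symm]
    exact zero_le
  refine ENNReal.le_mul_of_forall_lt (Or.inl ?_) (Or.inl ?_) fun a' ha' c hc => ?_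
  · exact (ENNReal.rpow_pos (pos_iff_ne_zero.2 hB0) hB).ne'
  · exact ENNReal.rpow_ne_top_of_nonneg (by positivity) hB
  rcases eq_or_ne c ∞ with rfl | hct
  · rw [ENNReal.mul_top (pos_of_gt ha').ne']; exact le_top
  refine le_trans ?_ (mul_le_mul_left ha'.le c)
  have hf : ∀ᵐ y ∂(wMeas r μ a b w),
      g y ^ r.toReal ≤ c ^ r.toReal * stielt ⊤ r ν lam a b u (Iic y) := by
    refine ae_wMeas ?_
    filter_upwards [ae_le_eSup_left g, ae_restrict_mem measurableSet_Ioo] with y hy hyab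
    rw [hH y ⟨hyab.1.le, hyab.2⟩, ← ENNReal.inv_rpow, ← ENNReal.mul_rpow_of_nonneg _ _ hP.le]
    refine ENNReal.rpow_le_rpow ?_ hP.le
    have h1 := mul_tail_le_RHSdual_top hct hyab.1.le hy hc.le
    rcases eq_or_ne (eSup ν (Ioo y b) u) 0 with h0 | h0
    · rw [h0, ENNReal.inv_zero, ENNReal.mul_top (pos_of_gt hc).ne']; exact le_top
    · rw [← div_eq_mul_inv]
      exact (ENNReal.le_div_iff_mul_le (Or.inl h0) (Or.inl (hN y hyab))).2 h1
  have key := upper_top (wMeas r μ a b w) (stielt ⊤ r ν lam a b u) wMeas_Iic wMeas_Ici_right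
    stielt_Iio hH0 (hB1.trans_ne hB) (fun y => g y ^ r.toReal)
    (ENNReal.rpow_ne_top_of_nonneg hP.le hct) hf
  rw [lintegral_wMeas hP hw hg, hB1] at key
  have := ENNReal.rpow_le_rpow key (z := 1 / r.toReal) (by positivity)
  rwa [ENNReal.mul_rpow_of_nonneg _ _ (by positivity), ← ENNReal.rpow_mul, ← ENNReal.rpow_mul,
    mul_one_div_cancel hP.ne', ENNReal.rpow_one, ENNReal.rpow_one, mul_comm] at this

lemma lower_concrete_top (hp : 0 < p) (hpq : p < ⊤) (hr : r⁻¹ = p⁻¹ - ⊤⁻¹)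
    (hw : Measurable w) (hd : Data ⊤ r a b ν lam u) {c : ℝ≥0∞} (hc : c ≠ ∞)
    (h : ∀ g : ℝ → ℝ≥0∞, Measurable g →
      Nrm p μ (Ioo a b) (fun t => g t * w t) ≤ c * RHSdual ⊤ a b μ ν u g) :
    tailInt p ⊤ r a b μ ν lam w u ^ (1 / r.toReal) ≤ c := by
  obtain ⟨hP, -⟩ := exponents_pos hp hpq hr
  obtain rfl : r = p := by simpa using hr
  have hH : ∀ z ∈ Ico a b, stielt ⊤ r ν lam a b u (Iic z) =
      (eSup ν (Ioo z b) u ^ r.toReal)⁻¹ := fun z hz => by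
    rw [stielt_Iic (hp.trans hpq) hd.hlam hz.1 hz.2 hP, hPlus, Nrm_top]
  have hN : ∀ z ∈ Ioo a b, eSup ν (Ioo z b) u ≠ ∞ := fun z hz => by
    have := Nrm_Ioo_lt_top hd.hu hz
    rwa [Nrm_top] at this
  have hB1 : ∫⁻ z, wMeas r μ a b w (Ici z) ∂(stielt ⊤ r ν lam a b u) =
      tailInt r ⊤ r a b μ ν lam w u := by
    rw [tailInt, div_self hP.ne']
    simp
  have hκm : ∀ z ∈ Ico a b,
      wMeas r μ a b w (Ici z) ≤ c ^ r.toReal * eSup ν (Ioo z b) u ^ r.toReal := by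
    intro z hz
    have hgm : Measurable ((Ici z).indicator (1 : ℝ → ℝ≥0∞)) :=
      measurable_one.indicator measurableSet_Ici
    have h1 := ENNReal.rpow_le_rpow (h _ hgm) hP.le
    rw [← lintegral_wMeas hP hw hgm] at h1
    have h2 : ∀ x, (Ici z).indicator (1 : ℝ → ℝ≥0∞) x ^ r.toReal =
        (Ici z).indicator (1 : ℝ → ℝ≥0∞) x := fun x => by
      by_cases hx : x ∈ Ici z
      · rw [indicator_of_mem hx]; simp
      · rw [indicator_of_notMem hx]; simp [hP]
    simp_rw [h2] at h1
    rw [lintegral_indicator_one measurableSet_Ici] at h1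
    rw [← ENNReal.mul_rpow_of_nonneg _ _ hP.le]
    refine h1.trans (ENNReal.rpow_le_rpow (mul_le_mul_right ?_ c) hP.le)
    rw [RHSdual_top]
    refine eSup_le_of_null ?_
    have hs : {x | x ∈ Ioo a b ∧ eSup ν (Ioo z b) u <
        u x * eSup μ (Ioo a x) ((Ici z).indicator 1)} ⊆
        {x | x ∈ Ioo z b ∧ eSup ν (Ioo z b) u < u x} := by
      rintro x ⟨hx, hlt⟩
      have hle1 : eSup μ (Ioo a x) ((Ici z).indicator 1) ≤ 1 :=
        eSup_left_le fun y _ => indicator_le_self' (fun _ _ => zero_le) y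
      refine ⟨⟨?_, hx.2⟩, hlt.trans_le (mul_le_of_le_one_right zero_le hle1)⟩
      by_contra! hxz
      have : eSup μ (Ioo a x) ((Ici z).indicator 1) ≤ 0 := eSup_left_le fun y hy => by
        rw [indicator_of_notMem]
        exact fun h => absurd (hy.trans_le hxz) (not_lt.2 h)
      rw [le_antisymm this zero_le, mul_zero] at hlt
      exact absurd hlt (not_lt.2 zero_le)
    exact measure_mono_null hs (eSup_lt_null _ _ _)
  obtain ⟨hfin, hW, -⟩ := admissible_consequences (wMeas r μ a b w) (stielt ⊤ r ν lam a b u)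
    (fun z => eSup ν (Ioo z b) u) hP hP (ENNReal.rpow_ne_top_of_nonneg hP.le hc) hH hN hκm
  rw [← hB1, lower_top _ _ wMeas_Iic wMeas_Ici_right stielt_Iio hfin hW, one_div,
    ENNReal.rpow_inv_le_iff hP]
  -- the extremal function is the reciprocal of the tail norm of `u`
  set g : ℝ → ℝ≥0∞ := fun y => (eSup ν (Ioo y b) u)⁻¹ with hg
  have hgm : Measurable g := Monotone.measurable fun x y hxy =>
    ENNReal.inv_le_inv.2 (eSup_mono_set ν u (Ioo_subset_Ioo_left hxy))
  have hR : RHSdual ⊤ a b μ ν u g ≤ 1 := by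
    rw [RHSdual_top]
    refine eSup_le_of_null ?_
    have h1 := ae_le_eSup_right (μ := ν) (a := a) (b := b) u
    rw [ae_restrict_iff' measurableSet_Ioo] at h1
    refine measure_eq_zero_iff_ae_notMem.2 (h1.mono fun x hx' hx => ?_)
    refine absurd hx.2 (not_lt.2 ?_)
    have : eSup μ (Ioo a x) g ≤ (u x)⁻¹ :=
      eSup_left_le fun y hy => ENNReal.inv_le_inv.2 (hx' hx.1 y hy)
    exact (mul_le_mul_right this _).trans (ENNReal.mul_inv_le_one _)
  calc ∫⁻ y, stielt ⊤ r ν lam a b u (Iic y) ∂(wMeas r μ a b w)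
      = ∫⁻ y, g y ^ r.toReal ∂(wMeas r μ a b w) := by
        refine lintegral_congr_ae (ae_wMeas ?_)
        filter_upwards [ae_restrict_mem measurableSet_Ioo] with y hy
        rw [hH y ⟨hy.1.le, hy.2⟩, ← ENNReal.inv_rpow]
    _ = Nrm r μ (Ioo a b) (fun x => g x * w x) ^ r.toReal := lintegral_wMeas hP hw hgm
    _ ≤ (c * RHSdual ⊤ a b μ ν u g) ^ r.toReal := ENNReal.rpow_le_rpow (h g hgm) hP.le
    _ ≤ (c * 1) ^ r.toReal := ENNReal.rpow_le_rpow (mul_le_mul_right hR _) hP.le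
    _ = c ^ r.toReal := by rw [mul_one]

end

/-- Both estimates with a common constant, which depends on the exponents only. -/
lemma exists_common_const {p q r : ℝ≥0∞} (hp : 0 < p) (hpq : p < q) (hr : r⁻¹ = p⁻¹ - q⁻¹) :
    ∃ D : ℝ≥0∞, D ≠ 0 ∧ D ≠ ∞ ∧ ∀ (a b : ℝ) (μ ν lam : Measure ℝ) (w u : ℝ → ℝ≥0∞),
      Measurable w → Measurable u → Data q r a b ν lam u →
      (tailInt p q r a b μ ν lam w u ≠ ∞ → ∀ g : ℝ → ℝ≥0∞, Measurable g →
        Nrm p μ (Ioo a b) (fun t => g t * w t) ≤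
          D * (tailInt p q r a b μ ν lam w u ^ (1 / r.toReal) * RHSdual q a b μ ν u g)) ∧
      ∀ c : ℝ≥0∞, c ≠ ∞ → (∀ g : ℝ → ℝ≥0∞, Measurable g →
        Nrm p μ (Ioo a b) (fun t => g t * w t) ≤ c * RHSdual q a b μ ν u g) →
        tailInt p q r a b μ ν lam w u ^ (1 / r.toReal) ≤ D * c := by
  obtain ⟨hP, hR⟩ := exponents_pos hp hpq hr
  rcases eq_or_ne q ∞ with rfl | hq
  · refine ⟨1, by simp, by simp, fun a b μ ν lam w u hw hu hd => ⟨fun hB g hg => ?_,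
      fun c hc h => ?_⟩⟩
    · rw [one_mul]; exact upper_concrete_top hp hpq hr hw hd hB hg
    · rw [one_mul]; exact lower_concrete_top hp hpq hr hw hd hc h
  · set D₁ : ℝ≥0∞ := (1 + 2 ^ (1 + q.toReal / r.toReal) * 2) ^ (1 / p.toReal)
    set D₂ : ℝ≥0∞ := (2 ^ (1 + 1 / (q.toReal / r.toReal)) * 2) ^ (1 / p.toReal)
    have h2 : ∀ s : ℝ, 0 ≤ s → (2 : ℝ≥0∞) ^ s ≠ ∞ := fun s hs =>
      ENNReal.rpow_ne_top_of_nonneg hs (by simp)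
    have hD₁ : D₁ ≠ ∞ := ENNReal.rpow_ne_top_of_nonneg (by positivity)
      (ENNReal.add_ne_top.2 ⟨by simp, ENNReal.mul_ne_top (h2 _ (by positivity)) (by simp)⟩)
    have hD₂ : D₂ ≠ ∞ := ENNReal.rpow_ne_top_of_nonneg (by positivity)
      (ENNReal.mul_ne_top (h2 _ (by positivity)) (by simp))
    refine ⟨1 + D₁ + D₂, by simp, by simp [hD₁, hD₂], fun a b μ ν lam w u hw hu hd =>
      ⟨fun hB g hg => ?_, fun c hc h => ?_⟩⟩
    · refine (upper_concrete_finite hp hpq hr hq hw hu hd hB hg).trans (mul_le_mul_left ?_ _)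
      exact le_add_right le_add_self
    · refine (lower_concrete_finite hp hpq hr hq hw hu hd hc h).trans (mul_le_mul_left ?_ _)
      exact le_add_self

/-! ### The characterization -/

/-- Remark 4.3 (ii)′: for `0 < p < q ≤ ∞` and `1/r = 1/p - 1/q`, the inequality
`‖gw‖_{p,(a,b),μ} ≤ c ‖u(x) ‖g‖_{∞,(a,x),μ}‖_{q,(a,b),ν}` holds for all `g ∈ B⁺((a,b))`
iff `B₂′ = (∫_{(a,b)} ‖w‖_{p,[x,b),μ}^r d(‖u‖_{q,[x-,b),ν}^{-r}))^{1/r}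
+ ‖w‖_{p,(a,b),μ} ‖u‖_{q,(a,b),ν}⁻¹ < ∞`, where the Lebesgue–Stieltjes measure `lam`
of the non-decreasing left-continuous function `x ↦ ‖u‖_{q,[x-,b),ν}^{-r}` is determined
by `lam([α,β)) = ‖u‖_{q,[β-,b),ν}^{-r} - ‖u‖_{q,[α-,b),ν}^{-r}`.  Moreover the best
constant satisfies `c ≈ B₂′` with constants depending only on `p` and `q`. -/
theorem statement12 (p q r : ℝ≥0∞) (hp : 0 < p) (hpq : p < q)
    (hr : r⁻¹ = p⁻¹ - q⁻¹) :
    ∃ C₁ C₂ : ℝ≥0∞, 0 < C₁ ∧ C₂ < ⊤ ∧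
      ∀ (a b : ℝ), a < b →
      ∀ (μ ν : Measure ℝ) (w u : ℝ → ℝ≥0∞),
        Measurable w → Measurable u →
        (∀ t ∈ Ioo a b, Nrm q ν (Ico t b) u < ⊤) →
        (∀ᵐ x ∂ν.restrict (Ioo a b), u x ≠ 0) →
        ∀ lam : Measure ℝ,
        (∀ α β : ℝ, a < α → α ≤ β → β < b →
            lam (Ico α β) =
              (uNminus q ν a b u β ^ r.toReal)⁻¹ - (uNminus q ν a b u α ^ r.toReal)⁻¹) →
        ((∃ c : ℝ≥0∞, 0 < c ∧ c < ⊤ ∧ ∀ g : ℝ → ℝ≥0∞, Measurable g →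
            Nrm p μ (Ioo a b) (fun t => g t * w t) ≤ c * RHSdual q a b μ ν u g) ↔
          (∫⁻ x in Ioo a b, Nrm p μ (Ico x b) w ^ r.toReal ∂lam) ^ (1 / r.toReal) +
            Nrm p μ (Ioo a b) w * (Nrm q ν (Ioo a b) u)⁻¹ < ⊤) ∧
        C₁ * ((∫⁻ x in Ioo a b, Nrm p μ (Ico x b) w ^ r.toReal ∂lam) ^ (1 / r.toReal) +
            Nrm p μ (Ioo a b) w * (Nrm q ν (Ioo a b) u)⁻¹) ≤
          bestCdual p q a b μ ν w u ∧
        bestCdual p q a b μ ν w u ≤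
          C₂ * ((∫⁻ x in Ioo a b, Nrm p μ (Ico x b) w ^ r.toReal ∂lam) ^ (1 / r.toReal) +
            Nrm p μ (Ioo a b) w * (Nrm q ν (Ioo a b) u)⁻¹) := by
  obtain ⟨D, hD0, hDt, hD⟩ := exists_common_const hp hpq hr
  obtain ⟨hP, hR⟩ := exponents_pos hp hpq hr
  refine ⟨(2 * D)⁻¹, D * 2 ^ (1 / r.toReal),
    ENNReal.inv_pos.2 (ENNReal.mul_ne_top (by simp) hDt),
    ENNReal.mul_lt_top hDt.lt_top (ENNReal.rpow_lt_top_of_nonneg (by positivity) (by simp)), ?_⟩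
  intro a b _ μ ν w u hw hu hut _ lam hlam
  obtain ⟨hup, hlow⟩ := hD a b μ ν lam w u hw hu ⟨hut, hlam⟩
  have hB₁ := tailInt_rpow_le (q := q) (μ := μ) (ν := ν) (lam := lam) (w := w) (u := u)
    (a := a) (b := b) hP hR
  have hB₂ := le_tailInt_rpow (q := q) (μ := μ) (ν := ν) (lam := lam) (w := w) (u := u)
    (a := a) (b := b) hP hR
  set B := (∫⁻ x in Ioo a b, Nrm p μ (Ico x b) w ^ r.toReal ∂lam) ^ (1 / r.toReal) +
    Nrm p μ (Ioo a b) w * (Nrm q ν (Ioo a b) u)⁻¹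
  have h2D0 : 2 * D ≠ 0 := mul_ne_zero (by simp) hD0
  have h2Dt : 2 * D ≠ ∞ := ENNReal.mul_ne_top (by simp) hDt
  have h2r : (2 : ℝ≥0∞) ^ (1 / r.toReal) ≠ ∞ :=
    ENNReal.rpow_ne_top_of_nonneg (by positivity) (by simp)
  have lower : ∀ c : ℝ≥0∞, (∀ g : ℝ → ℝ≥0∞, Measurable g →
      Nrm p μ (Ioo a b) (fun t => g t * w t) ≤ c * RHSdual q a b μ ν u g) →
      (2 * D)⁻¹ * B ≤ c := by
    intro c h
    rcases eq_or_ne c ∞ with rfl | hc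
    · exact le_top
    rw [mul_comm, ← div_eq_mul_inv]
    refine ENNReal.div_le_of_le_mul ?_
    calc B ≤ 2 * tailInt p q r a b μ ν lam w u ^ (1 / r.toReal) := hB₂
      _ ≤ 2 * (D * c) := mul_le_mul_right (hlow c hc h) _
      _ = c * (2 * D) := by ring
  have upper : B ≠ ∞ → ∀ g : ℝ → ℝ≥0∞, Measurable g →
      Nrm p μ (Ioo a b) (fun t => g t * w t) ≤
        D * 2 ^ (1 / r.toReal) * B * RHSdual q a b μ ν u g := by
    intro hB g hg
    have hT : tailInt p q r a b μ ν lam w u ≠ ∞ := by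
      intro hT
      rw [hT, ENNReal.top_rpow_of_pos (by positivity), top_le_iff] at hB₁
      exact ENNReal.mul_ne_top h2r hB hB₁
    calc Nrm p μ (Ioo a b) (fun t => g t * w t)
        ≤ D * (tailInt p q r a b μ ν lam w u ^ (1 / r.toReal) * RHSdual q a b μ ν u g) :=
          hup hT g hg
      _ ≤ D * (2 ^ (1 / r.toReal) * B * RHSdual q a b μ ν u g) := by gcongr
      _ = _ := by ring
  have hC₂t : D * 2 ^ (1 / r.toReal) ≠ ∞ := ENNReal.mul_ne_top hDt h2r
  have hC₂0 : D * 2 ^ (1 / r.toReal) ≠ 0 :=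
    mul_ne_zero hD0 (ENNReal.rpow_pos (by simp) (by simp)).ne'
  refine ⟨⟨?_, fun hB => ?_⟩, le_sInf fun c hc => lower c hc, ?_⟩
  · rintro ⟨c, -, hct, hc⟩
    by_contra hB
    have := lower c hc
    rw [not_lt_top_iff.1 hB, ENNReal.mul_top (ENNReal.inv_ne_zero.2 h2Dt)] at this
    exact absurd hct (not_lt.2 this)
  · -- adding `1` makes the constant positive when `B` vanishes
    refine ⟨D * 2 ^ (1 / r.toReal) * B + 1, by simp,
      ENNReal.add_lt_top.2 ⟨ENNReal.mul_lt_top hC₂t.lt_top hB, ENNReal.one_lt_top⟩, fun g hg => ?_⟩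
    exact (upper hB.ne g hg).trans (mul_le_mul_left le_self_add _)
  · rcases eq_or_ne B ∞ with hB | hB
    · rw [hB, ENNReal.mul_top hC₂0]; exact le_top
    · exact sInf_le fun g hg => upper hB g hg
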